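/- arXiv:1105.0632 — 3 statements merged into one kernel-verified Lean document; each statement's English description precedes it below -/
import Mathlib

section
/- Let D be a nonempty Borel subset of ℝ^d whose affine hull is all of ℝ^d, and 𝒰 = {u ∈ ℂ^d : sup_{x∈D} Re⟨u,x⟩ < ∞}, 𝒰_k = {u ∈ ℂ^d : sup_{x∈D} Re⟨u,x⟩ ≤ k}. Let F : 𝒰 → ℂ and R : 𝒰 → ℂ^d be continuous on 𝒰_k for every k ∈ ℕ. Suppose there exists a family (p_t(x,·))_{t>0, x∈D} of sub-probability Borel measures on D (i.e. p_t(x,D) ≤ 1) such that for all x ∈ D and u ∈ 𝒰: F(u) + ⟨x, R(u)⟩ = lim_{t→0+} (1/t) ( ∫_D e^{⟨ξ−x, u⟩} p_t(x,dξ) − 1 ). Then for every x ∈ D there exist a symmetric positive semidefinite real d×d matrix A(x), a vector B(x) ∈ ℝ^d, a real number C(x) ≥ 0, and a Borel measure ν(x,·) on ℝ^d ∖ {0} with ∫ min(‖ξ‖², 1) ν(x,dξ) < ∞, such that for all u ∈ 𝒰: F(u) + ⟨x, R(u)⟩ = (1/2)⟨u, A(x)u⟩ + ⟨B(x), u⟩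 − C(x) + ∫_{ℝ^d∖{0}} ( e^{⟨ξ,u⟩} − 1 − ⟨h(ξ), u⟩ ) ν(x,dξ), where h(ξ) = ξ·1_{‖ξ‖≤1}. Moreover, the dependence on x is affine: whenever x, y, z ∈ D and λ ∈ ℝ satisfy x = λy + (1−λ)z, one has A(x) = λA(y) + (1−λ)A(z), B(x) = λB(y) + (1−λ)B(z), C(x) = λC(y) + (1−λ)C(z), and ν(x,E) = λν(y,E) + (1−λ)ν(z,E) for every Borel set E ⊆ ℝ^d ∖ {0} whose closure does not contain 0 (whenever the right-hand sides are nonnegative). -/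
/-!
Fix a state `x` and put `μ n = t⁻¹ p_t (x, x + ·)` with `t = 1 / (n + 1)`. Subtracting the limit at
`u = 0`, which is `-C` and hence nonpositive, the hypothesis says that the compound-Poisson
exponents `∫ (exp ⟨u, ξ⟩ - 1) dμ n` converge for every `u ∈ 𝒰`, and the limit is continuous along
imaginary `u`. That such a limit has Lévy–Khintchine form is `exists_levy`:

* The real parts `∫ (1 - cos (s ξ i)) dμ n` converge pointwise in `s`. By Baire's theorem they are
  bounded uniformly near `s = 0`, so that averaging over a short interval and dominated convergence
  bound `∫ min (r² ‖ξ‖², 1) dμ n` by any prescribed `ε` for small `r` and large `n`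
  (`eventually_trunc_moment_le'`).
* Hence the finite measures `min (‖ξ‖², 1) μ n` are bounded and tight, and converge weakly to some
  `κ` along an ultrafilter (`exists_weak_limit`). Outside the origin, `κ / min (‖ξ‖², 1)` is the
  Lévy measure. The truncated second moments of `μ n` converge along the same ultrafilter, and their
  excess over those of the Lévy measure is the Gaussian covariance, nonnegative by
  `integral_levy_le_limit`.
* For complex `u ∈ 𝒰` the exponential is bounded on the support of all `μ n`, so it may be cut off
  there without changing anything. The second-order Taylor remainder of the cut-off exponential,
  divided by `min (‖ξ‖², 1)`, is bounded and continuous, so its integrals converge. The remaining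
  term, the linear one, then converges for imaginary `u`, hence for all `u`, to the drift.

The affine dependence on `x` follows from uniqueness (`lk_unique`), once negative coefficients are
moved to the other side of the relation between exponents. For uniqueness, the second difference of
an exponent in direction `e` is the characteristic function of the finite measure
`(1 - cos ⟨ξ, e⟩) ν + ½ ⟨e, A e⟩ δ₀`, which determines `A` and `ν` when `e` varies, and then `B`.
-/

open MeasureTheory Filter Topology

noncomputable section

/-- The bilinear pairing `⟨u,x⟩ = ∑ i, u i * x i` between `u ∈ ℂ^d` and `x ∈ ℝ^d`. -/
def pair {d : ℕ} (u : EuclideanSpace ℂ (Fin d)) (x : EuclideanSpace ℝ (Fin d)) : ℂ :=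
  ∑ i, u i * (x i : ℂ)

/-- The set `𝒰 = {u ∈ ℂ^d : sup_{x∈D} Re⟨u,x⟩ < ∞}`. -/
def Uset (d : ℕ) (D : Set (EuclideanSpace ℝ (Fin d))) : Set (EuclideanSpace ℂ (Fin d)) :=
  {u | ∃ C : ℝ, ∀ x ∈ D, (pair u x).re ≤ C}

/-- The set `𝒰_k = {u ∈ ℂ^d : sup_{x∈D} Re⟨u,x⟩ ≤ k}`. -/
def UsetLe (d : ℕ) (D : Set (EuclideanSpace ℝ (Fin d))) (k : ℝ) :
    Set (EuclideanSpace ℂ (Fin d)) :=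
  {u | ∀ x ∈ D, (pair u x).re ≤ k}

/-- The truncation function `h(ξ) = ξ 1_{‖ξ‖ ≤ 1}`. -/
def trunc {d : ℕ} (ξ : EuclideanSpace ℝ (Fin d)) : EuclideanSpace ℝ (Fin d) :=
  if ‖ξ‖ ≤ 1 then ξ else 0

/-! ### Truncated second moments in dimension one -/

lemma one_sub_sinc_ge_small {y : ℝ} (hy : 0 < y) (hy1 : y ≤ 1) :
    y ^ 2 / 10 ≤ 1 - Real.sinc y := by
  have hb := Real.sin_bound (x := y) (by rw [abs_of_pos hy]; exact hy1)
  rw [abs_of_pos hy] at hb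
  have h1 := (abs_le.1 hb).2
  rw [Real.sinc_of_ne_zero hy.ne']
  have : Real.sin y ≤ y * (1 - y ^ 2 / 10) := by
    have : y ^ 4 ≤ y ^ 3 := pow_le_pow_of_le_one hy.le hy1 (by norm_num)
    nlinarith [pow_pos hy 3]
  have : Real.sin y / y ≤ 1 - y ^ 2 / 10 := by
    rw [div_le_iff₀ hy]; linarith
  linarith

/-- The averaged kernel `1 - sinc` dominates `min (y², 1)` up to a constant. -/
lemma one_sub_sinc_ge (y : ℝ) : min (y ^ 2) 1 / 40 ≤ 1 - Real.sinc y := by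
  wlog hy : 0 ≤ y generalizing y
  · have := this (-y) (by linarith)
    simpa using this
  rcases hy.eq_or_lt with rfl | hy
  · simp
  rcases le_total y 1 with h1 | h1
  · have := one_sub_sinc_ge_small hy h1
    have h2 : min (y ^ 2) 1 ≤ y ^ 2 := min_le_left _ _
    nlinarith [sq_nonneg y]
  have hm : min (y ^ 2) 1 ≤ 1 := min_le_right _ _
  suffices Real.sinc y ≤ 39 / 40 by linarith
  rw [Real.sinc_of_ne_zero hy.ne', div_le_iff₀ hy]
  rcases le_total y 2 with h2 | h2
  · -- the double-angle formula brings the argument into the range of the cubic bound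
    have h3 := one_sub_sinc_ge_small (y := y / 2) (by linarith) (by linarith)
    rw [Real.sinc_of_ne_zero (by positivity), le_sub_comm, div_le_iff₀ (by linarith)] at h3
    have h4 : Real.sin y = 2 * Real.sin (y / 2) * Real.cos (y / 2) := by
      rw [← Real.sin_two_mul]; congr 1; ring
    have h5 : 0 ≤ Real.sin (y / 2) :=
      Real.sin_nonneg_of_nonneg_of_le_pi (by linarith) (by linarith [Real.pi_gt_three])
    have h6 := Real.cos_le_one (y / 2)
    have h7 : Real.sin y ≤ 2 * Real.sin (y / 2) := by rw [h4]; nlinarith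
    nlinarith
  · linarith [Real.sin_le_one y]

lemma one_sub_cos_sub_le (a b : ℝ) :
    1 - Real.cos (a - b) ≤ 2 * (1 - Real.cos a) + 2 * (1 - Real.cos b) := by
  have key : ∀ x : ℝ, 1 - Real.cos x = 2 * Real.sin (x / 2) ^ 2 := fun x => by
    have := Real.cos_two_mul (x / 2)
    rw [show 2 * (x / 2) = x by ring] at this
    rw [this, Real.cos_sq']; ring
  rw [key, key, key, sub_div, Real.sin_sub]
  have h1 := Real.sin_sq_add_cos_sq (a / 2)
  have h2 := Real.sin_sq_add_cos_sq (b / 2)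
  set s := Real.sin (a / 2); set c := Real.cos (a / 2)
  set s' := Real.sin (b / 2); set c' := Real.cos (b / 2)
  have e1 : (s * c') ^ 2 ≤ s ^ 2 := by
    nlinarith [sq_nonneg s, sq_nonneg s', mul_nonneg (sq_nonneg s) (sq_nonneg s')]
  have e2 : (c * s') ^ 2 ≤ s' ^ 2 := by
    nlinarith [sq_nonneg s, sq_nonneg s', mul_nonneg (sq_nonneg s) (sq_nonneg s')]
  nlinarith [sq_nonneg (s * c' + c * s')]

lemma integrable_one_sub_cos (m : Measure ℝ) [IsFiniteMeasure m] (s : ℝ) :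
    Integrable (fun y => 1 - Real.cos (s * y)) m := by
  refine Integrable.of_bound (C := 2) (by fun_prop) (ae_of_all _ fun y => ?_)
  rw [Real.norm_eq_abs, abs_le]
  constructor <;> linarith [Real.cos_le_one (s * y), Real.neg_one_le_cos (s * y)]

lemma continuous_integral_one_sub_cos (m : Measure ℝ) [IsFiniteMeasure m] :
    Continuous fun s : ℝ => ∫ y, (1 - Real.cos (s * y)) ∂m := by
  refine continuous_of_dominated (bound := fun _ => 2) (fun s => by fun_prop)
    (fun s => ae_of_all _ fun y => ?_) (integrable_const _) (ae_of_all _ fun y => by fun_prop)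
  rw [Real.norm_eq_abs, abs_le]
  constructor <;> linarith [Real.cos_le_one (s * y), Real.neg_one_le_cos (s * y)]

/-- Pointwise bounded functions of the form `s ↦ ∫ (1 - cos (s y)) dm` are uniformly bounded near
the origin: Baire's theorem gives a bound on some interval, and the inequality
`1 - cos (a - b) ≤ 2 (1 - cos a) + 2 (1 - cos b)` moves the interval to the origin. -/
lemma exists_uniform_bound (m : ℕ → Measure ℝ) [∀ n, IsFiniteMeasure (m n)]
    (hb : ∀ s : ℝ, ∃ M : ℝ, ∀ n, ∫ y, (1 - Real.cos (s * y)) ∂(m n) ≤ M) :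
    ∃ M : ℝ, ∃ δ > 0, ∀ s, |s| < δ → ∀ n, ∫ y, (1 - Real.cos (s * y)) ∂(m n) ≤ M := by
  let K : ℕ → Set ℝ := fun k => {s | ∀ n, ∫ y, (1 - Real.cos (s * y)) ∂(m n) ≤ k}
  have hKc : ∀ k, IsClosed (K k) := fun k => by
    have : K k = ⋂ n, {s | ∫ y, (1 - Real.cos (s * y)) ∂(m n) ≤ k} := by ext; simp [K]
    rw [this]
    exact isClosed_iInter fun n =>
      isClosed_le (continuous_integral_one_sub_cos (m n)) continuous_const
  have hKu : ⋃ k, K k = Set.univ := by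
    refine Set.eq_univ_of_forall fun s => ?_
    obtain ⟨M, hM⟩ := hb s
    obtain ⟨k, hk⟩ := exists_nat_ge M
    exact Set.mem_iUnion.2 ⟨k, fun n => (hM n).trans hk⟩
  obtain ⟨k, s₀, hs₀⟩ := nonempty_interior_of_iUnion_of_closed hKc hKu
  obtain ⟨δ, hδ, hball⟩ := Metric.isOpen_iff.1 isOpen_interior s₀ hs₀
  refine ⟨2 * k + 2 * k, δ, hδ, fun s hs n => ?_⟩
  have h1 : s₀ + s ∈ K k := interior_subset (hball (by simpa [Real.dist_eq] using hs))
  have h2 : s₀ ∈ K k := interior_subset hs₀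
  have i1 := integrable_one_sub_cos (m n) (s₀ + s)
  have i2 := integrable_one_sub_cos (m n) s₀
  calc ∫ y, (1 - Real.cos (s * y)) ∂(m n)
      ≤ ∫ y, (2 * (1 - Real.cos ((s₀ + s) * y)) + 2 * (1 - Real.cos (s₀ * y))) ∂(m n) := by
        refine integral_mono (integrable_one_sub_cos _ _) ((i1.const_mul 2).add (i2.const_mul 2))
          fun y => ?_
        have := one_sub_cos_sub_le ((s₀ + s) * y) (s₀ * y)
        rwa [show (s₀ + s) * y - s₀ * y = s * y by ring] at this
    _ ≤ _ := by
        rw [integral_add (i1.const_mul 2) (i2.const_mul 2), integral_const_mul, integral_const_mul]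
        have := h1 n
        have := h2 n
        linarith

/-- Averaging `1 - cos (s y)` over `s ∈ [-r, r]` gives `1 - sinc (r y)`, which is bounded below by
the truncated square. -/
lemma integral_Icc_one_sub_cos (m : Measure ℝ) [IsFiniteMeasure m] {r : ℝ} (hr : 0 < r) :
    ∫ s in -r..r, ∫ y, (1 - Real.cos (s * y)) ∂m = 2 * r * ∫ y, (1 - Real.sinc (r * y)) ∂m := by
  have h := integral_charFun_Icc (μ := m) hr
  have hsinc : Integrable (fun y => Real.sinc (r * y)) m :=
    Integrable.of_bound (C := 1) (by fun_prop) (ae_of_all _ fun y => Real.abs_sinc_le_one _)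
  have hre : ∀ s : ℝ, ∫ y, (1 - Real.cos (s * y)) ∂m = m.real Set.univ - (charFun m s).re := by
    intro s
    have hc : Integrable (fun y => Real.cos (s * y)) m :=
      Integrable.of_bound (C := 1) (by fun_prop) (ae_of_all _ fun y => Real.abs_cos_le_one _)
    have hi : Integrable (fun y : ℝ => Complex.exp (s * y * Complex.I)) m :=
      Integrable.of_bound (C := 1) (by fun_prop) (ae_of_all _ fun y => by
        rw [show (s * y * Complex.I : ℂ) = ((s * y : ℝ) : ℂ) * Complex.I by push_cast; ring,
          Complex.norm_exp_ofReal_mul_I])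
    rw [integral_sub (integrable_const _) hc, charFun_apply_real, integral_const]
    have : (∫ y : ℝ, Complex.exp (s * y * Complex.I) ∂m).re
        = ∫ y : ℝ, (Complex.exp (s * y * Complex.I)).re ∂m :=
      (Complex.reCLM.integral_comp_comm hi).symm
    rw [this, smul_eq_mul, mul_one]
    congr 2
    ext y
    rw [show (s * y * Complex.I : ℂ) = ((s * y : ℝ) : ℂ) * Complex.I by push_cast; ring,
      Complex.exp_ofReal_mul_I_re]
  have hcf : IntervalIntegrable (charFun m) volume (-r) r :=
    (continuous_charFun).intervalIntegrable _ _
  have h' : ∫ s in -r..r, (charFun m s).re = 2 * r * ∫ x, Real.sinc (r * x) ∂m := by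
    have : ∫ s in -r..r, (charFun m s).re = (∫ s in -r..r, charFun m s).re := by
      exact Complex.reCLM.intervalIntegral_comp_comm hcf
    rw [this, h, ← Complex.ofReal_re (2 * r * _)]; push_cast; rfl
  simp_rw [hre]
  rw [intervalIntegral.integral_sub (by simp) ?_, h', integral_sub (integrable_const _) hsinc]
  · simp; ring
  · exact (Complex.continuous_re.comp continuous_charFun).intervalIntegrable _ _

/-- Truncated second moments of one-dimensional measures are controlled by the symmetrised
exponents near the origin. -/
lemma eventually_trunc_moment_le (m : ℕ → Measure ℝ) [∀ n, IsFiniteMeasure (m n)] (φ : ℝ → ℝ)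
    (hφ : ∀ s, Tendsto (fun n => ∫ y, (1 - Real.cos (s * y)) ∂(m n)) atTop (𝓝 (φ s)))
    (hc : ContinuousAt φ 0) {ε : ℝ} (hε : 0 < ε) :
    ∃ r₀ > 0, ∀ r, 0 < r → r ≤ r₀ →
      ∀ᶠ n in atTop, ∫ y, min ((r * y) ^ 2) 1 ∂(m n) ≤ ε := by
  have hφ0 : φ 0 = 0 := tendsto_nhds_unique (hφ 0) (by simp)
  have hnn : ∀ s n, 0 ≤ ∫ y, (1 - Real.cos (s * y)) ∂(m n) := fun s n =>
    integral_nonneg fun y => by simpa using Real.cos_le_one (s * y)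
  obtain ⟨M, δ, hδ, hM⟩ := exists_uniform_bound m fun s => by
    obtain ⟨M, hM⟩ := (hφ s).bddAbove_range
    exact ⟨M, fun n => hM ⟨n, rfl⟩⟩
  obtain ⟨δ', hδ', hcφ⟩ := Metric.continuousAt_iff.1 hc (ε / 80) (by positivity)
  refine ⟨min δ δ' / 2, by positivity, fun r hr hr0 => ?_⟩
  have hrδ : r < δ := by have := min_le_left δ δ'; linarith
  have hrδ' : r < δ' := by have := min_le_right δ δ'; linarith
  have hlim : Tendsto (fun n => ∫ s in -r..r, ∫ y, (1 - Real.cos (s * y)) ∂(m n)) atTop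
      (𝓝 (∫ s in -r..r, φ s)) := by
    refine intervalIntegral.tendsto_integral_filter_of_dominated_convergence (fun _ => M)
      (Eventually.of_forall fun n => (continuous_integral_one_sub_cos (m n)).aestronglyMeasurable)
      (Eventually.of_forall fun n => ae_of_all _ fun s hs => ?_) (by simp)
      (ae_of_all _ fun s _ => hφ s)
    rw [Set.uIoc_of_le (by linarith)] at hs
    rw [Real.norm_eq_abs, abs_of_nonneg (hnn s n)]
    exact hM s (abs_lt.2 ⟨by linarith [hs.1], by linarith [hs.2]⟩) n
  have hlimle : ∫ s in -r..r, φ s ≤ ε / 80 * (2 * r) := by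
    have := intervalIntegral.norm_integral_le_of_norm_le_const (a := -r) (b := r) (f := φ)
      (C := ε / 80) fun s hs => by
        rw [Set.uIoc_of_le (by linarith)] at hs
        have := hcφ (x := s) (by
          rw [Real.dist_eq, sub_zero, abs_lt]; exact ⟨by linarith [hs.1], by linarith [hs.2]⟩)
        rw [hφ0, dist_zero_right] at this
        exact this.le
    rw [show |r - -r| = 2 * r by rw [abs_of_pos] <;> linarith] at this
    exact (Real.le_norm_self _).trans this
  filter_upwards [hlim.eventually_lt_const
    (show ∫ s in -r..r, φ s < ε / 40 * (2 * r) from hlimle.trans_lt (by nlinarith))] with n hn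
  rw [integral_Icc_one_sub_cos (m n) hr] at hn
  have i1 : Integrable (fun y => min ((r * y) ^ 2) 1) (m n) :=
    Integrable.of_bound (C := 1) (by fun_prop) (ae_of_all _ fun y => by
      rw [Real.norm_eq_abs, abs_of_nonneg (by positivity)]; exact min_le_right _ _)
  have i2 : Integrable (fun y => 1 - Real.sinc (r * y)) (m n) :=
    (integrable_const _).sub
      (Integrable.of_bound (C := 1) (by fun_prop) (ae_of_all _ fun y => Real.abs_sinc_le_one _))
  have h3 : (∫ y, min ((r * y) ^ 2) 1 ∂(m n)) / 40 ≤ ∫ y, (1 - Real.sinc (r * y)) ∂(m n) := by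
    rw [← integral_div]
    exact integral_mono (i1.div_const 40) i2 fun y => one_sub_sinc_ge _
  have h4 : ∫ y, (1 - Real.sinc (r * y)) ∂(m n) < ε / 40 := by
    have : 2 * r * ∫ y, (1 - Real.sinc (r * y)) ∂(m n) < 2 * r * (ε / 40) := by linarith
    exact lt_of_mul_lt_mul_left this (by positivity)
  linarith

/-! ### Truncations and the Taylor remainder of the exponential -/

variable {d : ℕ}

lemma pair_add (u : EuclideanSpace ℂ (Fin d)) (x y : EuclideanSpace ℝ (Fin d)) :
    pair u (x + y) = pair u x + pair u y := by
  simp [pair, mul_add, Finset.sum_add_distrib]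

lemma pair_smul (u : EuclideanSpace ℂ (Fin d)) (c : ℝ) (x : EuclideanSpace ℝ (Fin d)) :
    pair u (c • x) = c * pair u x := by
  simp only [pair, PiLp.smul_apply, smul_eq_mul, Complex.ofReal_mul, Finset.mul_sum]
  exact Finset.sum_congr rfl fun i _ => by ring

/-- The pairing with a fixed complex vector, as a continuous real-linear map. -/
def pairL (u : EuclideanSpace ℂ (Fin d)) : EuclideanSpace ℝ (Fin d) →L[ℝ] ℂ :=
  LinearMap.toContinuousLinearMap
    { toFun := pair u
      map_add' := pair_add u
      map_smul' := fun c x => by rw [pair_smul]; simp }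

lemma pairL_apply (u : EuclideanSpace ℂ (Fin d)) (x : EuclideanSpace ℝ (Fin d)) :
    pairL u x = pair u x := rfl

lemma pair_zero (u : EuclideanSpace ℂ (Fin d)) : pair u 0 = 0 := (pairL u).map_zero

lemma pair_sub (u : EuclideanSpace ℂ (Fin d)) (x y : EuclideanSpace ℝ (Fin d)) :
    pair u (x - y) = pair u x - pair u y := (pairL u).map_sub x y

@[fun_prop]
lemma continuous_pair (u : EuclideanSpace ℂ (Fin d)) : Continuous (pair u) := (pairL u).continuous

lemma norm_pair_le (u : EuclideanSpace ℂ (Fin d)) (x : EuclideanSpace ℝ (Fin d)) :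
    ‖pair u x‖ ≤ ‖pairL u‖ * ‖x‖ := (pairL u).le_opNorm x

/-- The purely imaginary vector `iθ`. -/
def imv (θ : EuclideanSpace ℝ (Fin d)) : EuclideanSpace ℂ (Fin d) :=
  WithLp.toLp 2 fun i => (θ i : ℂ) * Complex.I

lemma imv_apply (θ : EuclideanSpace ℝ (Fin d)) (i : Fin d) : imv θ i = (θ i : ℂ) * Complex.I := rfl

lemma pair_imv (θ ξ : EuclideanSpace ℝ (Fin d)) :
    pair (imv θ) ξ = (inner ℝ ξ θ : ℝ) * Complex.I := by
  simp only [pair, imv_apply, PiLp.inner_apply, Complex.ofReal_sum, Finset.sum_mul]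
  exact Finset.sum_congr rfl fun i _ => by simp; ring

lemma continuous_imv : Continuous (imv : EuclideanSpace ℝ (Fin d) → _) := by
  unfold imv; fun_prop

lemma imv_zero : imv (0 : EuclideanSpace ℝ (Fin d)) = 0 := by
  ext i; simp [imv_apply]

/-- The continuous truncation `ξ ↦ ξ / max (1, ‖ξ‖)`, the identity on the closed unit ball. -/
def ctrunc (ξ : EuclideanSpace ℝ (Fin d)) : EuclideanSpace ℝ (Fin d) := (max 1 ‖ξ‖)⁻¹ • ξ

@[fun_prop]
lemma continuous_ctrunc :
    Continuous (ctrunc : EuclideanSpace ℝ (Fin d) → EuclideanSpace ℝ (Fin d)) := by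
  unfold ctrunc
  exact Continuous.smul (f := fun ξ => (max 1 ‖ξ‖)⁻¹) (g := id)
    (Continuous.inv₀ (by fun_prop) fun x => by positivity) continuous_id

lemma ctrunc_of_le {ξ : EuclideanSpace ℝ (Fin d)} (h : ‖ξ‖ ≤ 1) : ctrunc ξ = ξ := by
  simp [ctrunc, max_eq_left h]

lemma norm_ctrunc (ξ : EuclideanSpace ℝ (Fin d)) : ‖ctrunc ξ‖ = min ‖ξ‖ 1 := by
  rw [ctrunc, norm_smul, norm_inv, Real.norm_of_nonneg (by positivity)]
  rcases le_total ‖ξ‖ 1 with h | h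
  · simp [h]
  · rw [max_eq_right h, min_eq_right h, inv_mul_cancel₀ (by linarith)]

/-- The weight `min (‖ξ‖², 1)`. -/
def wt (ξ : EuclideanSpace ℝ (Fin d)) : NNReal := (min (‖ξ‖ ^ 2) 1).toNNReal

lemma coe_wt (ξ : EuclideanSpace ℝ (Fin d)) : (wt ξ : ℝ) = min (‖ξ‖ ^ 2) 1 :=
  Real.coe_toNNReal _ (by positivity)

lemma norm_ctrunc_sq (ξ : EuclideanSpace ℝ (Fin d)) : ‖ctrunc ξ‖ ^ 2 = wt ξ := by
  rw [norm_ctrunc, coe_wt]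
  rcases le_total ‖ξ‖ 1 with h | h
  · rw [min_eq_left h, min_eq_left (pow_le_one₀ (norm_nonneg _) h)]
  · rw [min_eq_right h, min_eq_right (one_le_pow₀ h), one_pow]

lemma wt_le_one (ξ : EuclideanSpace ℝ (Fin d)) : (wt ξ : ℝ) ≤ 1 := by
  rw [coe_wt]; exact min_le_right _ _

@[fun_prop]
lemma continuous_wt : Continuous (wt : EuclideanSpace ℝ (Fin d) → _) := by
  unfold wt; fun_prop

lemma wt_of_le {ξ : EuclideanSpace ℝ (Fin d)} (h : ‖ξ‖ ≤ 1) : (wt ξ : ℝ) = ‖ξ‖ ^ 2 := by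
  rw [← norm_ctrunc_sq, ctrunc_of_le h]

lemma wt_of_ge {ξ : EuclideanSpace ℝ (Fin d)} (h : 1 ≤ ‖ξ‖) : (wt ξ : ℝ) = 1 := by
  rw [coe_wt, min_eq_right (one_le_pow₀ h)]

lemma wt_pos {ξ : EuclideanSpace ℝ (Fin d)} (h : ξ ≠ 0) : 0 < (wt ξ : ℝ) := by
  rw [coe_wt]; have := norm_pos_iff.2 h; positivity

lemma wt_zero : wt (0 : EuclideanSpace ℝ (Fin d)) = 0 := by simp [wt]

/-- The exponential with the real part of the argument cut off at level `K`. -/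
def cexpK (K : ℝ) (z : ℂ) : ℂ := Complex.exp ((min z.re K : ℝ) + (z.im : ℂ) * Complex.I)

lemma cexpK_of_le {K : ℝ} {z : ℂ} (h : z.re ≤ K) : cexpK K z = Complex.exp z := by
  rw [cexpK, min_eq_left h, Complex.re_add_im]

@[fun_prop]
lemma continuous_cexpK (K : ℝ) : Continuous (cexpK K) := by
  unfold cexpK; fun_prop

lemma norm_cexpK_le (K : ℝ) (z : ℂ) : ‖cexpK K z‖ ≤ Real.exp K := by
  rw [cexpK, Complex.norm_exp]; simp

/-- The second-order Taylor remainder of the exponential, with real part cut off at `K` and with the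
continuous truncation `ctrunc` in the polynomial part. It is bounded and continuous, so that it can
be tested against weakly convergent measures. -/
def remK (K : ℝ) (u : EuclideanSpace ℂ (Fin d)) (ξ : EuclideanSpace ℝ (Fin d)) : ℂ :=
  cexpK K (pair u ξ) - 1 - pair u (ctrunc ξ) - pair u (ctrunc ξ) ^ 2 / 2

@[fun_prop]
lemma continuous_remK (K : ℝ) (u : EuclideanSpace ℂ (Fin d)) : Continuous (remK K u) := by
  unfold remK; fun_prop

/-- Near the origin neither truncation is active, so `remK` is the third-order Taylor remainder
of the exponential. -/
lemma remK_cubic (K : ℝ) (hK : 1 ≤ K) (u : EuclideanSpace ℂ (Fin d)) :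
    ∃ δ > 0, δ ≤ 1 ∧ ∀ ξ : EuclideanSpace ℝ (Fin d), ‖ξ‖ < δ →
      ‖remK K u ξ‖ ≤ ‖pairL u‖ ^ 3 * ‖ξ‖ ^ 3 := by
  refine ⟨(1 + ‖pairL u‖)⁻¹, by positivity, inv_le_one_of_one_le₀ (by simp), fun ξ hξ => ?_⟩
  have h1 : ‖ξ‖ ≤ 1 := hξ.le.trans (inv_le_one_of_one_le₀ (by simp))
  have hz : ‖pair u ξ‖ ≤ 1 := by
    refine (norm_pair_le u ξ).trans ?_
    calc ‖pairL u‖ * ‖ξ‖ ≤ ‖pairL u‖ * (1 + ‖pairL u‖)⁻¹ := by gcongr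
      _ ≤ 1 := by rw [mul_inv_le_iff₀ (by positivity)]; linarith
  have hre : (pair u ξ).re ≤ K := ((Complex.re_le_norm _).trans hz).trans hK
  rw [remK, ctrunc_of_le h1, cexpK_of_le hre]
  have hb := Complex.exp_bound hz (n := 3) (by norm_num)
  have : ∑ m ∈ Finset.range 3, pair u ξ ^ m / (m.factorial : ℂ)
      = 1 + pair u ξ + pair u ξ ^ 2 / 2 := by
    simp [Finset.sum_range_succ, Nat.factorial]
  rw [this] at hb
  have h2 : Complex.exp (pair u ξ) - 1 - pair u ξ - pair u ξ ^ 2 / 2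
      = Complex.exp (pair u ξ) - (1 + pair u ξ + pair u ξ ^ 2 / 2) := by ring
  rw [h2]
  refine hb.trans ?_
  rw [← mul_pow]
  have h3 := norm_pair_le u ξ
  have h4 : ‖pair u ξ‖ ^ 3 ≤ (‖pairL u‖ * ‖ξ‖) ^ 3 := by gcongr
  have h5 : (0:ℝ) ≤ ‖pair u ξ‖ ^ 3 := by positivity
  norm_num [Nat.factorial]
  nlinarith

/-- The quotient `remK / min (‖ξ‖², 1)`, with the value `0` at the origin (division by zero). -/
def quotK (K : ℝ) (u : EuclideanSpace ℂ (Fin d)) (ξ : EuclideanSpace ℝ (Fin d)) : ℂ :=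
  (wt ξ)⁻¹ • remK K u ξ

/-- A continuous function vanishing at the origin to order greater than two has a continuous
quotient by `min (‖ξ‖², 1)`. -/
lemma continuous_wt_inv_smul {F : Type*} [NormedAddCommGroup F] [NormedSpace ℝ F]
    {g : EuclideanSpace ℝ (Fin d) → F} (hg : Continuous g) {C δ : ℝ} (hδ : 0 < δ) (hδ1 : δ ≤ 1)
    (h : ∀ ξ, ‖ξ‖ < δ → ‖g ξ‖ ≤ C * ‖ξ‖ ^ 3) :
    Continuous fun ξ => (wt ξ)⁻¹ • g ξ := by
  rw [continuous_iff_continuousAt]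
  intro ξ
  by_cases hξ : ξ = 0
  · subst hξ
    rw [ContinuousAt, wt_zero, inv_zero, zero_smul]
    refine squeeze_zero_norm' (a := fun ξ => C * ‖ξ‖) ?_ ?_
    · filter_upwards [Metric.ball_mem_nhds 0 hδ] with ξ hξ
      rw [mem_ball_zero_iff] at hξ
      by_cases h0 : ξ = 0
      · simp [h0, wt_zero]
      have hp := norm_pos_iff.2 h0
      rw [NNReal.smul_def, norm_smul, NNReal.coe_inv, wt_of_le (hξ.le.trans hδ1),
        Real.norm_of_nonneg (by positivity), inv_mul_le_iff₀ (by positivity)]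
      calc _ ≤ _ := h ξ hξ
        _ = _ := by ring
    · have : Continuous fun ξ : EuclideanSpace ℝ (Fin d) => C * ‖ξ‖ := by fun_prop
      simpa using this.tendsto 0
  · refine ContinuousAt.smul (ContinuousAt.inv₀ (by fun_prop) ?_) hg.continuousAt
    have := wt_pos hξ
    exact_mod_cast this.ne'

/-- The quotient of a bounded function by `min (‖ξ‖², 1)` is bounded as soon as it is continuous:
compactness handles the unit ball, and the weight is `1` outside of it. -/
lemma bounded_wt_inv_smul {F : Type*} [NormedAddCommGroup F] [NormedSpace ℝ F]
    {g : EuclideanSpace ℝ (Fin d) → F} (hc : Continuous fun ξ => (wt ξ)⁻¹ • g ξ) {C : ℝ}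
    (h : ∀ ξ, ‖g ξ‖ ≤ C) : ∃ M, ∀ ξ, ‖(wt ξ)⁻¹ • g ξ‖ ≤ M := by
  obtain ⟨M, hM⟩ :=
    (isCompact_closedBall (0 : EuclideanSpace ℝ (Fin d)) 1).exists_bound_of_continuousOn
      hc.continuousOn
  refine ⟨max M C, fun ξ => ?_⟩
  rcases le_total ‖ξ‖ 1 with h1 | h1
  · exact (hM ξ (by simpa using h1)).trans (le_max_left _ _)
  · have : wt ξ = 1 := by exact_mod_cast wt_of_ge h1
    rw [this]
    simpa using Or.inr (h ξ)

/-! ### Weak compactness -/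

/-- Truncated second moments of the measures are eventually arbitrarily small after rescaling, if
the symmetrised exponents converge along each coordinate axis to functions continuous at `0`. -/
lemma eventually_trunc_moment_le' (μ : ℕ → Measure (EuclideanSpace ℝ (Fin d)))
    [∀ n, IsFiniteMeasure (μ n)] (φ : Fin d → ℝ → ℝ)
    (hφ : ∀ i s, Tendsto (fun n => ∫ ξ, (1 - Real.cos (s * ξ i)) ∂(μ n)) atTop (𝓝 (φ i s)))
    (hc : ∀ i, ContinuousAt (φ i) 0) {ε : ℝ} (hε : 0 < ε) :
    ∃ r, 0 < r ∧ r ≤ 1 ∧ ∀ᶠ n in atTop, ∫ ξ, min ((r * ‖ξ‖) ^ 2) 1 ∂(μ n) ≤ ε := by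
  have hm : ∀ i : Fin d, Measurable fun ξ : EuclideanSpace ℝ (Fin d) => ξ i := fun i => by fun_prop
  have h1 : ∀ i, ∃ r₀ > 0, ∀ r, 0 < r → r ≤ r₀ →
      ∀ᶠ n in atTop, ∫ y, min ((r * y) ^ 2) 1 ∂((μ n).map fun ξ => ξ i) ≤ ε / (d + 1) := by
    intro i
    refine eventually_trunc_moment_le _ (φ i) (fun s => ?_) (hc i) (by positivity)
    convert hφ i s using 2 with n
    rw [integral_map (hm i).aemeasurable (by fun_prop)]
  choose r₀ hr₀ h using h1
  obtain ⟨r, hr, hr'⟩ : ∃ r, 0 < r ∧ r ≤ 1 ∧ ∀ i, r ≤ r₀ i := by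
    have : ∀ᶠ r in 𝓝[>] (0 : ℝ), 0 < r ∧ r ≤ 1 ∧ ∀ i, r ≤ r₀ i := by
      refine Filter.Eventually.and (eventually_mem_nhdsWithin) (Filter.Eventually.and ?_ ?_)
      · exact eventually_nhdsWithin_of_eventually_nhds (eventually_le_nhds one_pos)
      · exact eventually_all.2 fun i =>
          eventually_nhdsWithin_of_eventually_nhds (eventually_le_nhds (hr₀ i))
    exact this.exists
  refine ⟨r, hr, hr'.1, ?_⟩
  filter_upwards [eventually_all.2 fun i => h i r hr (hr'.2 i)] with n hn
  have hi : ∀ i, Integrable (fun ξ : EuclideanSpace ℝ (Fin d) => min ((r * ξ i) ^ 2) 1) (μ n) :=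
    fun i => Integrable.of_bound (C := 1) (by fun_prop) (ae_of_all _ fun y => by
      rw [Real.norm_eq_abs, abs_of_nonneg (by positivity)]; exact min_le_right _ _)
  have hsum : ∀ ξ : EuclideanSpace ℝ (Fin d),
      min ((r * ‖ξ‖) ^ 2) 1 ≤ ∑ i, min ((r * ξ i) ^ 2) 1 := by
    intro ξ
    by_cases hex : ∃ i, 1 ≤ (r * ξ i) ^ 2
    · obtain ⟨i, hi⟩ := hex
      refine (min_le_right _ _).trans ?_
      have := Finset.single_le_sum (f := fun i => min ((r * ξ i) ^ 2) 1)
        (fun i _ => by positivity) (Finset.mem_univ i)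
      rwa [min_eq_right hi] at this
    · push Not at hex
      refine (min_le_left _ _).trans (le_of_eq ?_)
      rw [mul_pow, EuclideanSpace.real_norm_sq_eq, Finset.mul_sum]
      exact Finset.sum_congr rfl fun i _ => by rw [min_eq_left (hex i).le, mul_pow]
  calc ∫ ξ, min ((r * ‖ξ‖) ^ 2) 1 ∂(μ n) ≤ ∫ ξ, ∑ i, min ((r * ξ i) ^ 2) 1 ∂(μ n) := by
        refine integral_mono (Integrable.of_bound (C := 1) (by fun_prop) (ae_of_all _ fun y => ?_))
          (integrable_finsetSum _ fun i _ => hi i) hsum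
        rw [Real.norm_eq_abs, abs_of_nonneg (by positivity)]; exact min_le_right _ _
    _ = ∑ i, ∫ ξ, min ((r * ξ i) ^ 2) 1 ∂(μ n) := integral_finsetSum _ fun i _ => hi i
    _ ≤ ∑ i : Fin d, ε / (d + 1) := by
        refine Finset.sum_le_sum fun i _ => ?_
        have := hn i
        rwa [integral_map (hm i).aemeasurable (by fun_prop)] at this
    _ ≤ ε := by
        simp only [Finset.sum_const, Finset.card_univ, Fintype.card_fin, nsmul_eq_mul]
        rw [mul_div_assoc', div_le_iff₀ (by positivity)]
        nlinarith

/-- Weak compactness of the measures `min (‖ξ‖², 1) μ n`, along an ultrafilter finer than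
`atTop`. -/
lemma exists_weak_limit (μ : ℕ → Measure (EuclideanSpace ℝ (Fin d)))
    [∀ n, IsFiniteMeasure (μ n)]
    (h : ∀ ε : ℝ, 0 < ε → ∃ r, 0 < r ∧ r ≤ 1 ∧
      ∀ᶠ n in atTop, ∫ ξ, min ((r * ‖ξ‖) ^ 2) 1 ∂(μ n) ≤ ε) :
    ∃ (l : Ultrafilter ℕ) (κ : Measure (EuclideanSpace ℝ (Fin d))),
      (l : Filter ℕ) ≤ atTop ∧ IsFiniteMeasure κ ∧
      (∀ f : EuclideanSpace ℝ (Fin d) → ℂ, Continuous f → (∃ M, ∀ ξ, ‖f ξ‖ ≤ M) →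
        Tendsto (fun n => ∫ ξ, wt ξ • f ξ ∂(μ n)) l (𝓝 (∫ ξ, f ξ ∂κ))) ∧
      (∀ f : EuclideanSpace ℝ (Fin d) → ℝ, Continuous f → (∃ M, ∀ ξ, ‖f ξ‖ ≤ M) →
        Tendsto (fun n => ∫ ξ, wt ξ • f ξ ∂(μ n)) l (𝓝 (∫ ξ, f ξ ∂κ))) ∧
      ∃ M, ∀ n, ∫ ξ, (wt ξ : ℝ) ∂(μ n) ≤ M := by
  have iwt : ∀ n, Integrable (fun ξ => (wt ξ : ℝ)) (μ n) := fun n =>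
    Integrable.of_bound (C := 1) (by fun_prop) (ae_of_all _ fun ξ => by simpa using wt_le_one ξ)
  have imin : ∀ (r : ℝ) n, Integrable (fun ξ => min ((r * ‖ξ‖) ^ 2) 1) (μ n) := fun r n =>
    Integrable.of_bound (C := 1) (by fun_prop) (ae_of_all _ fun y => by
      rw [Real.norm_eq_abs, abs_of_nonneg (by positivity)]; exact min_le_right _ _)
  let κn : ℕ → Measure (EuclideanSpace ℝ (Fin d)) := fun n =>
    (μ n).withDensity fun ξ => (wt ξ : ENNReal)
  have hmwt : Measurable (wt : EuclideanSpace ℝ (Fin d) → NNReal) := continuous_wt.measurable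
  have hle : ∀ n, κn n ≤ μ n := fun n => by
    calc κn n ≤ (μ n).withDensity 1 := withDensity_mono (ae_of_all _ fun ξ => by
          have h1 : wt ξ ≤ 1 := wt_le_one ξ
          show (wt ξ : ENNReal) ≤ 1
          exact_mod_cast h1)
      _ = μ n := withDensity_one
  have hfin : ∀ n, IsFiniteMeasure (κn n) := fun n => isFiniteMeasure_of_le (μ n) (hle n)
  have hmass : ∀ n, (κn n).real Set.univ = ∫ ξ, (wt ξ : ℝ) ∂(μ n) := fun n => by
    have := integral_withDensity_eq_integral_smul (μ := μ n) hmwt (fun _ => (1 : ℝ))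
    simp only [integral_const, smul_eq_mul, mul_one] at this
    rw [this]
    simp [NNReal.smul_def]
  obtain ⟨M, hM⟩ : ∃ M, ∀ n, ∫ ξ, (wt ξ : ℝ) ∂(μ n) ≤ M := by
    obtain ⟨r, hr, hr1, hev⟩ := h 1 one_pos
    have : IsBoundedUnder (· ≤ ·) atTop fun n => ∫ ξ, (wt ξ : ℝ) ∂(μ n) := by
      refine ⟨r⁻¹ ^ 2, ?_⟩
      rw [eventually_map]
      filter_upwards [hev] with n hn
      calc ∫ ξ, (wt ξ : ℝ) ∂(μ n) ≤ ∫ ξ, r⁻¹ ^ 2 * min ((r * ‖ξ‖) ^ 2) 1 ∂(μ n) := by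
            refine integral_mono (iwt n) ((imin r n).const_mul _) fun ξ => ?_
            simp only [coe_wt]
            rw [mul_min_of_nonneg _ _ (by positivity)]
            refine min_le_min (le_of_eq ?_) ?_
            · field_simp
            · have : 1 ≤ r⁻¹ := (one_le_inv₀ hr).2 hr1
              nlinarith
        _ ≤ r⁻¹ ^ 2 := by
            rw [integral_const_mul]
            exact mul_le_of_le_one_right (by positivity) hn
    obtain ⟨M, hM⟩ := this.bddAbove_range
    exact ⟨M, fun n => hM ⟨n, rfl⟩⟩
  have htight : IsTightMeasureSet (Set.range κn) := by
    refine isTightMeasureSet_range_of_tendsto_limsup_measure_norm_gt ?_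
    rw [ENNReal.tendsto_atTop_zero]
    intro ε hε
    obtain ⟨ε', hε', hεle⟩ : ∃ ε' : ℝ, 0 < ε' ∧ ENNReal.ofReal ε' ≤ ε := by
      obtain ⟨q, hq, hq'⟩ := ENNReal.lt_iff_exists_nnreal_btwn.1 hε
      exact ⟨q, by exact_mod_cast hq, by simpa using hq'.le⟩
    obtain ⟨r, hr, hr1, hev⟩ := h ε' hε'
    refine ⟨r⁻¹, fun R hR => limsup_le_of_le (by isBoundedDefault) ?_⟩
    filter_upwards [hev] with n hn
    refine le_trans ?_ hεle
    have hms : MeasurableSet {ξ : EuclideanSpace ℝ (Fin d) | R < ‖ξ‖} :=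
      measurableSet_lt measurable_const measurable_norm
    calc κn n {ξ | R < ‖ξ‖} ≤ μ n {ξ | R < ‖ξ‖} := hle n _
      _ = ENNReal.ofReal ((μ n).real {ξ | R < ‖ξ‖}) := by simp [Measure.real]
      _ ≤ ENNReal.ofReal (∫ ξ, min ((r * ‖ξ‖) ^ 2) 1 ∂(μ n)) := by
          refine ENNReal.ofReal_le_ofReal ?_
          rw [← integral_indicator_one hms]
          refine integral_mono ((integrable_const (1 : ℝ)).indicator hms) (imin r n) fun ξ => ?_
          by_cases hξ : R < ‖ξ‖
          · have h1 : 1 ≤ r * ‖ξ‖ := by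
              rw [← inv_mul_le_iff₀ hr, mul_one]; linarith
            simp only [Set.indicator, Set.mem_ofPred_eq, hξ, if_true, Pi.one_apply]
            rw [min_eq_right (one_le_pow₀ h1)]
          · simp only [Set.indicator, Set.mem_ofPred_eq, hξ, if_false]
            positivity
      _ ≤ ENNReal.ofReal ε' := ENNReal.ofReal_le_ofReal hn
  obtain ⟨v, -, v_pos, v_lim⟩ :
      ∃ u : ℕ → NNReal, StrictAnti u ∧ (∀ n, 0 < u n) ∧ Tendsto u atTop (𝓝 0) :=
    exists_seq_strictAnti_tendsto 0
  have hK : ∀ k, ∃ K : Set (EuclideanSpace ℝ (Fin d)), IsCompact K ∧ ∀ n, κn n Kᶜ ≤ v k := by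
    intro k
    obtain ⟨K, hK1, hK2⟩ := isTightMeasureSet_iff_exists_isCompact_measure_compl_le.1 htight (v k)
      (by exact_mod_cast v_pos k)
    exact ⟨K, hK1, fun n => hK2 _ ⟨n, rfl⟩⟩
  choose K hKc hKle using hK
  have hcomp := isCompact_setOfPred_finiteMeasure_mass_le_compl_isCompact_le
    (E := EuclideanSpace ℝ (Fin d)) M.toNNReal v_lim hKc (Or.inl inferInstance)
  let κf : ℕ → FiniteMeasure (EuclideanSpace ℝ (Fin d)) := fun n => ⟨κn n, hfin n⟩
  let l : Ultrafilter ℕ := Ultrafilter.of atTop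
  have hl : (l : Filter ℕ) ≤ atTop := Ultrafilter.of_le _
  obtain ⟨κ, -, hκ⟩ := hcomp.ultrafilter_le_nhds' (l.map κf) (by
    rw [Ultrafilter.mem_map]
    refine Filter.univ_mem' fun n => ⟨?_, fun k => ?_⟩
    · rw [← NNReal.coe_le_coe]
      refine le_trans ?_ (Real.le_coe_toNNReal M)
      have := hM n
      rw [← hmass n] at this
      exact this
    · rw [← ENNReal.coe_le_coe, FiniteMeasure.ennreal_coeFn_eq_coeFn_toMeasure]
      exact hKle k n)
  have hκ' : Tendsto κf l (𝓝 κ) := hκ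
  refine ⟨l, κ, hl, inferInstance, fun f hf ⟨B, hB⟩ => ?_, fun f hf ⟨B, hB⟩ => ?_, M, hM⟩
  · have := (FiniteMeasure.tendsto_iff_forall_integral_rclike_tendsto ℂ).1 hκ'
      (BoundedContinuousFunction.ofNormedAddCommGroup f hf B hB)
    refine this.congr fun n => ?_
    exact integral_withDensity_eq_integral_smul hmwt f
  · have := (FiniteMeasure.tendsto_iff_forall_integral_rclike_tendsto ℝ).1 hκ'
      (BoundedContinuousFunction.ofNormedAddCommGroup f hf B hB)
    refine this.congr fun n => ?_
    exact integral_withDensity_eq_integral_smul hmwt f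

/-! ### Lévy measures -/

/-- Lévy measures: no atom at the origin, and `min (‖ξ‖², 1)` is integrable. -/
def IsLevy (ν : Measure (EuclideanSpace ℝ (Fin d))) : Prop :=
  ν {0} = 0 ∧ (∫⁻ ξ, ENNReal.ofReal (min (‖ξ‖ ^ 2) 1) ∂ν) < ⊤

lemma IsLevy.integrable_wt {ν : Measure (EuclideanSpace ℝ (Fin d))} (hν : IsLevy ν) :
    Integrable (fun ξ => (wt ξ : ℝ)) ν := by
  refine ⟨by fun_prop, ?_⟩
  rw [hasFiniteIntegral_iff_ofReal (ae_of_all _ fun ξ => by positivity)]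
  simpa only [coe_wt] using hν.2

lemma IsLevy.integrable {ν : Measure (EuclideanSpace ℝ (Fin d))} (hν : IsLevy ν)
    {F : Type*} [NormedAddCommGroup F] {f : EuclideanSpace ℝ (Fin d) → F}
    (hf : AEStronglyMeasurable f ν) {C : ℝ} (h : ∀ᵐ ξ ∂ν, ‖f ξ‖ ≤ C * wt ξ) :
    Integrable f ν :=
  (hν.integrable_wt.const_mul C).mono' hf h

lemma norm_pair_ctrunc_sq_le (u : EuclideanSpace ℂ (Fin d)) (ξ : EuclideanSpace ℝ (Fin d)) :
    ‖pair u (ctrunc ξ) ^ 2‖ ≤ ‖pairL u‖ ^ 2 * wt ξ := by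
  rw [← norm_ctrunc_sq, ← mul_pow, norm_pow]
  exact pow_le_pow_left₀ (norm_nonneg _) (norm_pair_le _ _) 2

lemma norm_remK_le (K : ℝ) (u : EuclideanSpace ℂ (Fin d)) (ξ : EuclideanSpace ℝ (Fin d)) :
    ‖remK K u ξ‖ ≤ Real.exp K + 1 + ‖pairL u‖ + ‖pairL u‖ ^ 2 := by
  have h1 := norm_cexpK_le K (pair u ξ)
  have h2 : ‖pair u (ctrunc ξ)‖ ≤ ‖pairL u‖ := by
    refine (norm_pair_le _ _).trans (mul_le_of_le_one_right (by positivity) ?_)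
    rw [norm_ctrunc]; exact min_le_right _ _
  have h3 : ‖pair u (ctrunc ξ) ^ 2 / 2‖ ≤ ‖pairL u‖ ^ 2 := by
    rw [norm_div, norm_pow]
    have : ‖pair u (ctrunc ξ)‖ ^ 2 ≤ ‖pairL u‖ ^ 2 := by gcongr
    simp only [Complex.norm_ofNat]
    have h0 : 0 ≤ ‖pair u (ctrunc ξ)‖ ^ 2 := by positivity
    linarith
  have h4 : ‖(1 : ℂ)‖ = 1 := norm_one
  unfold remK
  refine (norm_sub_le _ _).trans (add_le_add ((norm_sub_le _ _).trans
    (add_le_add ((norm_sub_le _ _).trans (add_le_add h1 h4.le)) h2)) h3)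

lemma continuous_quotK {K : ℝ} (hK : 1 ≤ K) (u : EuclideanSpace ℂ (Fin d)) :
    Continuous (quotK K u) := by
  obtain ⟨δ, hδ, hδ1, h⟩ := remK_cubic K hK u
  exact continuous_wt_inv_smul (continuous_remK K u) hδ hδ1 h

lemma bounded_quotK {K : ℝ} (hK : 1 ≤ K) (u : EuclideanSpace ℂ (Fin d)) :
    ∃ M, ∀ ξ, ‖quotK K u ξ‖ ≤ M :=
  bounded_wt_inv_smul (continuous_quotK hK u) (norm_remK_le K u)

lemma wt_smul_inv_smul {F : Type*} [AddCommGroup F] [Module ℝ F]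
    {g : EuclideanSpace ℝ (Fin d) → F} (h0 : g 0 = 0) (ξ : EuclideanSpace ℝ (Fin d)) :
    wt ξ • (wt ξ)⁻¹ • g ξ = g ξ := by
  by_cases hξ : ξ = 0
  · simp [hξ, h0]
  · have : wt ξ ≠ 0 := by exact_mod_cast (wt_pos hξ).ne'
    rw [smul_smul, mul_inv_cancel₀ this, one_smul]

lemma remK_zero {K : ℝ} (hK : 0 ≤ K) (u : EuclideanSpace ℂ (Fin d)) : remK K u 0 = 0 := by
  have : ctrunc (0 : EuclideanSpace ℝ (Fin d)) = 0 := by simp [ctrunc]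
  rw [remK, this, pair_zero, cexpK_of_le (by simpa using hK)]
  simp

lemma norm_remK_le_wt {K : ℝ} (hK : 1 ≤ K) (u : EuclideanSpace ℂ (Fin d)) :
    ∃ C, ∀ ξ, ‖remK K u ξ‖ ≤ C * wt ξ := by
  obtain ⟨M, hM⟩ := bounded_quotK hK u
  refine ⟨M, fun ξ => ?_⟩
  rw [← wt_smul_inv_smul (remK_zero (by linarith) u) ξ, NNReal.smul_def, norm_smul,
    Real.norm_of_nonneg (by positivity), mul_comm]
  gcongr
  exact hM ξ

lemma trunc_sub_ctrunc_le (ξ : EuclideanSpace ℝ (Fin d)) :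
    ‖trunc ξ - ctrunc ξ‖ ≤ wt ξ := by
  by_cases h : ‖ξ‖ ≤ 1
  · simp [trunc, h, ctrunc_of_le h]
  · rw [trunc, if_neg h, zero_sub, norm_neg, norm_ctrunc, wt_of_ge (by linarith)]
    exact min_le_right _ _

@[fun_prop]
lemma measurable_trunc :
    Measurable (trunc : EuclideanSpace ℝ (Fin d) → EuclideanSpace ℝ (Fin d)) := by
  unfold trunc
  exact Measurable.ite (measurableSet_le measurable_norm measurable_const) measurable_id
    measurable_const

lemma pair_sq_expand (u : EuclideanSpace ℂ (Fin d)) (x : EuclideanSpace ℝ (Fin d)) :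
    pair u x ^ 2 = ∑ i, ∑ j, u i * ((x i * x j : ℝ) : ℂ) * u j := by
  rw [sq, pair, Finset.sum_mul_sum]
  refine Finset.sum_congr rfl fun i _ => Finset.sum_congr rfl fun j _ => ?_
  push_cast; ring

/-- The integral of the quadratic part of the exponent is the quadratic form of the truncated second
moments. -/
lemma integral_pair_ctrunc_sq (m : Measure (EuclideanSpace ℝ (Fin d)))
    (hm : Integrable (fun ξ => (wt ξ : ℝ)) m) (u : EuclideanSpace ℂ (Fin d)) :
    ∫ ξ, pair u (ctrunc ξ) ^ 2 ∂m
      = ∑ i, ∑ j, u i * ((∫ ξ, ctrunc ξ i * ctrunc ξ j ∂m : ℝ) : ℂ) * u j := by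
  have hi : ∀ i j, Integrable (fun ξ => ctrunc ξ i * ctrunc ξ j) m := fun i j => by
    refine hm.mono' (by fun_prop) (ae_of_all _ fun ξ => ?_)
    rw [norm_mul, ← norm_ctrunc_sq, sq]
    exact mul_le_mul (PiLp.norm_apply_le _ _) (PiLp.norm_apply_le _ _) (norm_nonneg _)
      (norm_nonneg _)
  have hi' : ∀ i j, Integrable
      (fun ξ => u i * ((ctrunc ξ i * ctrunc ξ j : ℝ) : ℂ) * u j) m := fun i j =>
    (((hi i j).ofReal (𝕜 := ℂ)).const_mul (u i)).mul_const (u j)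
  simp_rw [pair_sq_expand]
  rw [integral_finsetSum _ fun i _ => integrable_finsetSum _ fun j _ => hi' i j]
  refine Finset.sum_congr rfl fun i _ => ?_
  rw [integral_finsetSum _ fun j _ => hi' i j]
  refine Finset.sum_congr rfl fun j _ => ?_
  rw [integral_mul_const, integral_const_mul, integral_complex_ofReal]

/-- A real vector, seen as a complex one. -/
def rev (v : EuclideanSpace ℝ (Fin d)) : EuclideanSpace ℂ (Fin d) :=
  WithLp.toLp 2 fun i => (v i : ℂ)

lemma pair_rev (v ξ : EuclideanSpace ℝ (Fin d)) : pair (rev v) ξ = (inner ℝ ξ v : ℝ) := by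
  simp only [pair, rev, PiLp.inner_apply, Complex.ofReal_sum]
  exact Finset.sum_congr rfl fun i _ => by simp

lemma integral_inner_ctrunc_sq (m : Measure (EuclideanSpace ℝ (Fin d)))
    (hm : Integrable (fun ξ => (wt ξ : ℝ)) m) (v : EuclideanSpace ℝ (Fin d)) :
    ∫ ξ, (inner ℝ (ctrunc ξ) v : ℝ) ^ 2 ∂m
      = ∑ i, ∑ j, v i * (∫ ξ, ctrunc ξ i * ctrunc ξ j ∂m) * v j := by
  have h := integral_pair_ctrunc_sq m hm (rev v)
  apply Complex.ofReal_injective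
  rw [← integral_complex_ofReal]
  push_cast
  simp_rw [pair_rev] at h
  rw [h]
  rfl

/-- A weak limit `κ` of the measures `min (‖ξ‖², 1) μ n` yields the Lévy measure
`κ / min (‖ξ‖², 1)`; the atom of `κ` at the origin is dropped, as the density vanishes there. -/
lemma isLevy_withDensity_inv (κ : Measure (EuclideanSpace ℝ (Fin d))) [IsFiniteMeasure κ] :
    IsLevy (κ.withDensity fun ξ => (((wt ξ)⁻¹ : NNReal) : ENNReal)) := by
  have hmwt : Measurable (wt : EuclideanSpace ℝ (Fin d) → NNReal) := continuous_wt.measurable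
  constructor
  · rw [withDensity_apply _ (measurableSet_singleton 0), lintegral_singleton, wt_zero]
    simp
  · rw [lintegral_withDensity_eq_lintegral_mul _ (by fun_prop) (by fun_prop)]
    calc _ ≤ ∫⁻ ξ, 1 ∂κ := by
          refine lintegral_mono fun ξ => ?_
          show (((wt ξ)⁻¹ : NNReal) : ENNReal) * (wt ξ : ENNReal) ≤ 1
          rw [← ENNReal.coe_mul]
          exact_mod_cast inv_mul_le_one
      _ < ⊤ := by simp

/-! ### Lévy–Khintchine exponents and weak limits -/

/-- The Lévy–Khintchine exponent without killing, for the truncation function `trunc`. -/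
def lkExp (A : Matrix (Fin d) (Fin d) ℝ) (B : EuclideanSpace ℝ (Fin d))
    (ν : Measure (EuclideanSpace ℝ (Fin d))) (u : EuclideanSpace ℂ (Fin d)) : ℂ :=
  (1/2 : ℂ) * (∑ i, ∑ j, u i * (A i j : ℂ) * u j) + pair u B
    + ∫ ξ, (Complex.exp (pair u ξ) - 1 - pair u (trunc ξ)) ∂ν

lemma posSemidef_of_quadratic {A : Matrix (Fin d) (Fin d) ℝ} (hs : ∀ i j, A i j = A j i)
    (h : ∀ v : EuclideanSpace ℝ (Fin d), 0 ≤ ∑ i, ∑ j, v i * A i j * v j) : A.PosSemidef := by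
  refine Matrix.PosSemidef.of_dotProduct_mulVec_nonneg ?_ fun v => ?_
  · ext i j; simp [hs i j]
  · have := h (WithLp.toLp 2 v)
    simpa [dotProduct, Matrix.mulVec, Finset.mul_sum, mul_assoc] using this

/-- The part of the limiting covariance not explained by the Lévy measure is nonnegative: by
lower semicontinuity, the mass lost at the origin can only contribute to the Gaussian part. -/
lemma integral_levy_le_limit (μ : ℕ → Measure (EuclideanSpace ℝ (Fin d)))
    [∀ n, IsFiniteMeasure (μ n)] (l : Ultrafilter ℕ) (κ ν : Measure (EuclideanSpace ℝ (Fin d)))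
    (hν : IsLevy ν)
    (hνκ : ∀ f : EuclideanSpace ℝ (Fin d) → ℝ, ∫ ξ, f ξ ∂ν = ∫ ξ, (wt ξ)⁻¹ • f ξ ∂κ)
    (hκ : ∀ f : EuclideanSpace ℝ (Fin d) → ℝ, Continuous f → (∃ M, ∀ ξ, ‖f ξ‖ ≤ M) →
        Tendsto (fun n => ∫ ξ, wt ξ • f ξ ∂(μ n)) l (𝓝 (∫ ξ, f ξ ∂κ)))
    (v : EuclideanSpace ℝ (Fin d)) (Q : ℝ)
    (hQ : Tendsto (fun n => ∫ ξ, (inner ℝ (ctrunc ξ) v : ℝ) ^ 2 ∂(μ n)) l (𝓝 Q)) :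
    ∫ ξ, (inner ℝ (ctrunc ξ) v : ℝ) ^ 2 ∂ν ≤ Q := by
  let q : EuclideanSpace ℝ (Fin d) → ℝ := fun ξ => (inner ℝ (ctrunc ξ) v : ℝ) ^ 2
  have hq0 : ∀ ξ, 0 ≤ q ξ := fun ξ => sq_nonneg _
  have hqle : ∀ ξ, q ξ ≤ ‖v‖ ^ 2 * wt ξ := fun ξ => by
    rw [← norm_ctrunc_sq, ← mul_pow, mul_comm]
    exact sq_le_sq' (neg_le_of_abs_le (abs_real_inner_le_norm _ _))
      (le_of_abs_le (abs_real_inner_le_norm _ _))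
  have hqc : Continuous q := by fun_prop
  let χ : ℕ → EuclideanSpace ℝ (Fin d) → ℝ := fun k ξ => min 1 (k * ‖ξ‖)
  have hχ0 : ∀ k ξ, 0 ≤ χ k ξ := fun k ξ => by positivity
  have hχ1 : ∀ k ξ, χ k ξ ≤ 1 := fun k ξ => min_le_left _ _
  have hle : ∀ k, ∫ ξ, χ k ξ * q ξ ∂ν ≤ Q := by
    intro k
    have hgc : Continuous fun ξ => χ k ξ * q ξ := by fun_prop
    have hc := continuous_wt_inv_smul hgc (C := k * ‖v‖ ^ 2) one_pos le_rfl fun ξ hξ => by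
      have h1 := hqle ξ
      rw [wt_of_le hξ.le] at h1
      rw [Real.norm_of_nonneg (mul_nonneg (hχ0 _ _) (hq0 _))]
      calc χ k ξ * q ξ ≤ (k * ‖ξ‖) * (‖v‖ ^ 2 * ‖ξ‖ ^ 2) :=
            mul_le_mul (min_le_right _ _) h1 (hq0 _) (by positivity)
        _ = _ := by ring
    have hb := bounded_wt_inv_smul hc (C := ‖v‖ ^ 2) fun ξ => by
      rw [Real.norm_of_nonneg (mul_nonneg (hχ0 _ _) (hq0 _))]
      calc χ k ξ * q ξ ≤ 1 * (‖v‖ ^ 2 * wt ξ) :=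
            mul_le_mul (hχ1 _ _) (hqle ξ) (hq0 _) zero_le_one
        _ ≤ ‖v‖ ^ 2 := by
            rw [one_mul]
            exact mul_le_of_le_one_right (by positivity) (wt_le_one ξ)
    have ht := hκ _ hc hb
    rw [← hνκ] at ht
    refine le_of_tendsto_of_tendsto' ht hQ fun n => ?_
    refine integral_mono_of_nonneg (ae_of_all _ fun ξ => ?_) ?_ (ae_of_all _ fun ξ => ?_)
    · exact smul_nonneg zero_le (smul_nonneg zero_le (mul_nonneg (hχ0 _ _) (hq0 _)))
    · refine Integrable.of_bound (C := ‖v‖ ^ 2) (by fun_prop) (ae_of_all _ fun ξ => ?_)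
      rw [Real.norm_of_nonneg (hq0 ξ)]
      exact (hqle ξ).trans (mul_le_of_le_one_right (by positivity) (wt_le_one ξ))
    · have := wt_smul_inv_smul (g := fun ξ => χ k ξ * q ξ) (by simp [χ]) ξ
      show wt ξ • (wt ξ)⁻¹ • (χ k ξ * q ξ) ≤ q ξ
      rw [this]
      exact mul_le_of_le_one_left (hq0 ξ) (hχ1 k ξ)
  refine le_of_tendsto' (x := atTop) (tendsto_integral_of_dominated_convergence (μ := ν)
    (F := fun k ξ => χ k ξ * q ξ) (fun ξ => ‖v‖ ^ 2 * wt ξ) (fun k => ?_)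
    (hν.integrable_wt.const_mul _) (fun k => ae_of_all _ fun ξ => ?_) (ae_of_all _ fun ξ => ?_)) hle
  · exact Continuous.aestronglyMeasurable (by fun_prop)
  · rw [Real.norm_of_nonneg (mul_nonneg (hχ0 _ _) (hq0 _))]
    exact (mul_le_of_le_one_left (hq0 ξ) (hχ1 k ξ)).trans (hqle ξ)
  · by_cases hξ : ξ = 0
    · simp [χ, hξ, ctrunc]
    have hp := norm_pos_iff.2 hξ
    have : (fun k => χ k ξ * q ξ) =ᶠ[atTop] fun _ => q ξ := by
      obtain ⟨N, hN⟩ := exists_nat_ge ‖ξ‖⁻¹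
      filter_upwards [eventually_ge_atTop N] with k hk
      have : 1 ≤ (k : ℝ) * ‖ξ‖ := by
        rw [← inv_le_iff_one_le_mul₀ hp]
        exact hN.trans (by exact_mod_cast hk)
      simp [χ, min_eq_left this]
    exact tendsto_const_nhds.congr' this.symm

/-- A closed constraint `g ≤ K` satisfied by all approximating measures is inherited by the weak
limit, so the exponential stays bounded on the support of the limiting Lévy measure. -/
lemma ae_le_of_weak_limit (μ : ℕ → Measure (EuclideanSpace ℝ (Fin d)))
    (l : Ultrafilter ℕ) (κ : Measure (EuclideanSpace ℝ (Fin d))) [IsFiniteMeasure κ]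
    (hκ : ∀ f : EuclideanSpace ℝ (Fin d) → ℝ, Continuous f → (∃ M, ∀ ξ, ‖f ξ‖ ≤ M) →
        Tendsto (fun n => ∫ ξ, wt ξ • f ξ ∂(μ n)) l (𝓝 (∫ ξ, f ξ ∂κ)))
    {g : EuclideanSpace ℝ (Fin d) → ℝ} (hg : Continuous g) {K : ℝ}
    (h : ∀ n, ∀ᵐ ξ ∂(μ n), g ξ ≤ K) : ∀ᵐ ξ ∂κ, g ξ ≤ K := by
  let f : EuclideanSpace ℝ (Fin d) → ℝ := fun ξ => min (max (g ξ - K) 0) 1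
  have hf0 : ∀ ξ, 0 ≤ f ξ := fun ξ => by positivity
  have hfc : Continuous f := by fun_prop
  have hf1 : ∀ ξ, ‖f ξ‖ ≤ 1 := fun ξ => by
    rw [Real.norm_of_nonneg (hf0 ξ)]; exact min_le_right _ _
  have ht := hκ f hfc ⟨1, hf1⟩
  have hz : ∀ n, ∫ ξ, wt ξ • f ξ ∂(μ n) = 0 := fun n => by
    refine integral_eq_zero_of_ae ?_
    filter_upwards [h n] with ξ hξ
    have : f ξ = 0 := by
      simp only [f]
      rw [max_eq_right (by linarith), min_eq_left zero_le_one]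
    simp [this]
  simp_rw [hz] at ht
  have h0 : ∫ ξ, f ξ ∂κ = 0 := tendsto_nhds_unique ht tendsto_const_nhds
  rw [integral_eq_zero_iff_of_nonneg hf0
    (Integrable.of_bound (C := 1) hfc.aestronglyMeasurable (ae_of_all _ hf1))] at h0
  filter_upwards [h0] with ξ hξ
  by_contra hcon
  push Not at hcon
  have : 0 < f ξ := lt_min (lt_max_of_lt_left (by linarith)) one_pos
  exact this.ne' hξ

/-! ### Limits of compound-Poisson exponents -/

lemma integrable_exp_pair (m : Measure (EuclideanSpace ℝ (Fin d))) [IsFiniteMeasure m]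
    {u : EuclideanSpace ℂ (Fin d)} {K : ℝ} (h : ∀ᵐ ξ ∂m, (pair u ξ).re ≤ K) :
    Integrable (fun ξ => Complex.exp (pair u ξ)) m := by
  refine Integrable.of_bound (C := Real.exp K) (by fun_prop) ?_
  filter_upwards [h] with ξ hξ
  rw [Complex.norm_exp]
  exact Real.exp_le_exp.2 hξ

lemma integral_pair_comp (m : Measure (EuclideanSpace ℝ (Fin d))) (u : EuclideanSpace ℂ (Fin d))
    {g : EuclideanSpace ℝ (Fin d) → EuclideanSpace ℝ (Fin d)} (hg : Integrable g m) :
    ∫ ξ, pair u (g ξ) ∂m = pair u (∫ ξ, g ξ ∂m) :=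
  (pairL u).integral_comp_comm hg

lemma norm_ctrunc_le_one (ξ : EuclideanSpace ℝ (Fin d)) : ‖ctrunc ξ‖ ≤ 1 := by
  rw [norm_ctrunc]; exact min_le_right _ _

lemma integrable_ctrunc (m : Measure (EuclideanSpace ℝ (Fin d))) [IsFiniteMeasure m] :
    Integrable (ctrunc : EuclideanSpace ℝ (Fin d) → EuclideanSpace ℝ (Fin d)) m :=
  Integrable.of_bound (C := 1) (continuous_ctrunc.aestronglyMeasurable)
    (ae_of_all _ norm_ctrunc_le_one)

lemma IsLevy.integrable_trunc_sub {ν : Measure (EuclideanSpace ℝ (Fin d))} (hν : IsLevy ν) :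
    Integrable (fun ξ => trunc ξ - ctrunc ξ) ν :=
  hν.integrable (C := 1) (by fun_prop) (ae_of_all _ fun ξ => by
    rw [one_mul]; exact trunc_sub_ctrunc_le ξ)

lemma IsLevy.integrable_remK {ν : Measure (EuclideanSpace ℝ (Fin d))} (hν : IsLevy ν)
    {K : ℝ} (hK : 1 ≤ K) (u : EuclideanSpace ℂ (Fin d)) : Integrable (remK K u) ν := by
  obtain ⟨C, hC⟩ := norm_remK_le_wt hK u
  exact hν.integrable (by fun_prop) (ae_of_all _ hC)

lemma IsLevy.integrable_pair_sq {ν : Measure (EuclideanSpace ℝ (Fin d))} (hν : IsLevy ν)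
    (u : EuclideanSpace ℂ (Fin d)) : Integrable (fun ξ => pair u (ctrunc ξ) ^ 2) ν :=
  hν.integrable (by fun_prop) (ae_of_all _ (norm_pair_ctrunc_sq_le u))

/-- The compensated integrand of the Lévy–Khintchine formula, on the set where the cut-off of the
exponential is inactive. -/
lemma levy_integrand_eq {K : ℝ} {u : EuclideanSpace ℂ (Fin d)} {ξ : EuclideanSpace ℝ (Fin d)}
    (h : (pair u ξ).re ≤ K) :
    Complex.exp (pair u ξ) - 1 - pair u (trunc ξ)
      = remK K u ξ - pair u (trunc ξ - ctrunc ξ) + (1/2 : ℂ) * pair u (ctrunc ξ) ^ 2 := by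
  rw [remK, cexpK_of_le h, pair_sub]; ring

lemma IsLevy.integrable_integrand {ν : Measure (EuclideanSpace ℝ (Fin d))} (hν : IsLevy ν)
    {K : ℝ} {u : EuclideanSpace ℂ (Fin d)} (h : ∀ᵐ ξ ∂ν, (pair u ξ).re ≤ K) :
    Integrable (fun ξ => Complex.exp (pair u ξ) - 1 - pair u (trunc ξ)) ν := by
  have h' : ∀ᵐ ξ ∂ν, (pair u ξ).re ≤ max 1 K := h.mono fun ξ hξ => hξ.trans (le_max_right _ _)
  refine (((hν.integrable_remK (le_max_left 1 K) u).sub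
    ((pairL u).integrable_comp hν.integrable_trunc_sub)).add
      ((hν.integrable_pair_sq u).const_mul (1/2 : ℂ))).congr ?_
  filter_upwards [h'] with ξ hξ
  exact (levy_integrand_eq hξ).symm

lemma lkExp_eq_of_ae_le (A : Matrix (Fin d) (Fin d) ℝ) (B : EuclideanSpace ℝ (Fin d))
    {ν : Measure (EuclideanSpace ℝ (Fin d))} (hν : IsLevy ν)
    {K : ℝ} (hK : 1 ≤ K) {u : EuclideanSpace ℂ (Fin d)} (h : ∀ᵐ ξ ∂ν, (pair u ξ).re ≤ K) :
    lkExp A B ν u = ∫ ξ, remK K u ξ ∂ν + pair u (B - ∫ ξ, (trunc ξ - ctrunc ξ) ∂ν)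
      + (1/2 : ℂ) * ∑ i, ∑ j,
        u i * ((A i j + ∫ ξ, ctrunc ξ i * ctrunc ξ j ∂ν : ℝ) : ℂ) * u j := by
  have e1 : ∫ ξ, (Complex.exp (pair u ξ) - 1 - pair u (trunc ξ)) ∂ν
      = ∫ ξ, (remK K u ξ - pair u (trunc ξ - ctrunc ξ)
        + (1/2 : ℂ) * pair u (ctrunc ξ) ^ 2) ∂ν :=
    integral_congr_ae (h.mono fun ξ hξ => levy_integrand_eq hξ)
  have i1 := hν.integrable_remK hK u
  have i2 : Integrable (fun ξ => pair u (trunc ξ - ctrunc ξ)) ν :=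
    (pairL u).integrable_comp hν.integrable_trunc_sub
  have i3 := (hν.integrable_pair_sq u).const_mul (1/2 : ℂ)
  rw [lkExp, e1,
    integral_add (f := fun ξ => remK K u ξ - pair u (trunc ξ - ctrunc ξ)) (i1.sub i2) i3,
    integral_sub i1 i2, integral_const_mul,
    integral_pair_comp _ _ hν.integrable_trunc_sub, integral_pair_ctrunc_sq ν hν.integrable_wt,
    pair_sub]
  simp only [Complex.ofReal_add, mul_add, add_mul, Finset.sum_add_distrib]
  ring

/-- The limit of compound-Poisson exponents is of Lévy–Khintchine form, if it is continuous at
the origin along imaginary arguments. Complex arguments are allowed as long as the exponential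
stays bounded on the supports of the approximating measures. -/
lemma exists_levy (μ : ℕ → Measure (EuclideanSpace ℝ (Fin d))) [∀ n, IsFiniteMeasure (μ n)]
    (U : Set (EuclideanSpace ℂ (Fin d)))
    (hU : ∀ u ∈ U, ∃ K : ℝ, ∀ n, ∀ᵐ ξ ∂(μ n), (pair u ξ).re ≤ K)
    (him : ∀ θ, imv θ ∈ U) (η : EuclideanSpace ℂ (Fin d) → ℂ)
    (hη : ∀ u ∈ U, Tendsto (fun n => ∫ ξ, (Complex.exp (pair u ξ) - 1) ∂(μ n)) atTop (𝓝 (η u)))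
    (hc : ContinuousAt (fun θ => η (imv θ)) 0) :
    ∃ (A : Matrix (Fin d) (Fin d) ℝ) (B : EuclideanSpace ℝ (Fin d))
      (ν : Measure (EuclideanSpace ℝ (Fin d))),
      A.PosSemidef ∧ IsLevy ν ∧ ∀ u ∈ U, η u = lkExp A B ν u := by
  classical
  let e : Fin d → EuclideanSpace ℝ (Fin d) := fun i => EuclideanSpace.single i 1
  have hin : ∀ (i : Fin d) (s : ℝ) (ξ : EuclideanSpace ℝ (Fin d)),
      inner ℝ ξ (s • e i) = s * ξ i := fun i s ξ => by
    rw [inner_smul_right]; simp [e, EuclideanSpace.inner_single_right]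
  let φ : Fin d → ℝ → ℝ := fun i s => -(η (imv (s • e i))).re
  have hφ : ∀ i s, Tendsto (fun n => ∫ ξ, (1 - Real.cos (s * ξ i)) ∂(μ n)) atTop
      (𝓝 (φ i s)) := by
    intro i s
    have h1 := ((Complex.continuous_re.tendsto _).comp (hη _ (him (s • e i)))).neg
    refine h1.congr fun n => ?_
    have hi : Integrable (fun ξ => Complex.exp (pair (imv (s • e i)) ξ) - 1) (μ n) := by
      obtain ⟨K, hK⟩ := hU _ (him (s • e i))
      exact (integrable_exp_pair _ (hK n)).sub (integrable_const _)
    have h2 : ∫ ξ, (Complex.exp (pair (imv (s • e i)) ξ) - 1).re ∂(μ n) = _ :=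
      Complex.reCLM.integral_comp_comm hi
    show -(∫ ξ, (Complex.exp (pair (imv (s • e i)) ξ) - 1) ∂(μ n)).re = _
    rw [Complex.reCLM_apply] at h2
    rw [← h2, ← integral_neg]
    refine integral_congr_ae (ae_of_all _ fun ξ => ?_)
    simp only [pair_imv, hin]
    rw [Complex.sub_re, Complex.exp_ofReal_mul_I_re]
    simp
  have hφc : ∀ i, ContinuousAt (φ i) 0 := by
    intro i
    have h1 : ContinuousAt (fun s : ℝ => s • e i) 0 := by fun_prop
    have h2 : ContinuousAt (fun s : ℝ => η (imv (s • e i))) 0 :=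
      ContinuousAt.comp (f := fun s : ℝ => s • e i) (g := fun θ => η (imv θ))
        (by simpa using hc) h1
    exact (Complex.continuous_re.continuousAt.comp h2).neg
  obtain ⟨l, κ, hl, hκf, hκC, hκR, M, hM⟩ := exists_weak_limit μ
    fun ε hε => eventually_trunc_moment_le' μ φ hφ hφc hε
  let ν := κ.withDensity fun ξ => (((wt ξ)⁻¹ : NNReal) : ENNReal)
  have hν : IsLevy ν := isLevy_withDensity_inv κ
  have hmw : Measurable fun ξ : EuclideanSpace ℝ (Fin d) => (wt ξ)⁻¹ :=
    continuous_wt.measurable.inv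
  have hwi : ∀ n, Integrable (fun ξ => (wt ξ : ℝ)) (μ n) := fun n =>
    Integrable.of_bound (C := 1) (by fun_prop) (ae_of_all _ fun ξ => by
      rw [Real.norm_of_nonneg (by positivity)]; exact wt_le_one ξ)
  -- Second moments converge along the ultrafilter by compactness.
  have hΓ : ∀ i j, ∃ c : ℝ,
      Tendsto (fun n => ∫ ξ, ctrunc ξ i * ctrunc ξ j ∂(μ n)) l (𝓝 c) := by
    intro i j
    have hb : ∀ n, (∫ ξ, ctrunc ξ i * ctrunc ξ j ∂(μ n)) ∈ Set.Icc (-M) M := by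
      intro n
      rw [Set.mem_Icc, ← abs_le, ← Real.norm_eq_abs]
      refine (norm_integral_le_of_norm_le (hwi n) (ae_of_all _ fun ξ => ?_)).trans (hM n)
      rw [norm_mul, ← norm_ctrunc_sq, sq]
      exact mul_le_mul (PiLp.norm_apply_le _ _) (PiLp.norm_apply_le _ _) (norm_nonneg _)
        (norm_nonneg _)
    obtain ⟨c, -, hc⟩ := isCompact_Icc.ultrafilter_le_nhds'
      (l.map fun n => ∫ ξ, ctrunc ξ i * ctrunc ξ j ∂(μ n))
      (Ultrafilter.mem_map.2 (Filter.univ_mem' hb))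
    exact ⟨c, hc⟩
  choose Γ hΓ using hΓ
  have hΓs : ∀ i j, Γ i j = Γ j i := fun i j => by
    refine tendsto_nhds_unique (hΓ i j) ((hΓ j i).congr fun n => ?_)
    simp_rw [mul_comm]
  have hquad : ∀ u : EuclideanSpace ℂ (Fin d),
      Tendsto (fun n => ∫ ξ, pair u (ctrunc ξ) ^ 2 ∂(μ n)) l
        (𝓝 (∑ i, ∑ j, u i * (Γ i j : ℂ) * u j)) := by
    intro u
    simp_rw [fun n => integral_pair_ctrunc_sq (μ n) (hwi n) u]
    refine tendsto_finsetSum _ fun i _ => tendsto_finsetSum _ fun j _ => ?_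
    exact (((Complex.continuous_ofReal.tendsto _).comp (hΓ i j)).const_mul _).mul_const _
  have hrem : ∀ (K : ℝ), 1 ≤ K → ∀ u : EuclideanSpace ℂ (Fin d),
      Tendsto (fun n => ∫ ξ, remK K u ξ ∂(μ n)) l (𝓝 (∫ ξ, remK K u ξ ∂ν)) := by
    intro K hK u
    have h1 := hκC _ (continuous_quotK hK u) (bounded_quotK hK u)
    have h2 : ∫ ξ, remK K u ξ ∂ν = ∫ ξ, quotK K u ξ ∂κ :=
      integral_withDensity_eq_integral_smul hmw _
    rw [h2]
    refine h1.congr fun n => integral_congr_ae (ae_of_all _ fun ξ => ?_)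
    exact wt_smul_inv_smul (remK_zero (by linarith) u) ξ
  let bs : ℕ → EuclideanSpace ℝ (Fin d) := fun n => ∫ ξ, ctrunc ξ ∂(μ n)
  have hsplit : ∀ u (K : ℝ), 1 ≤ K → (∀ n, ∀ᵐ ξ ∂(μ n), (pair u ξ).re ≤ K) → ∀ n,
      ∫ ξ, (Complex.exp (pair u ξ) - 1) ∂(μ n)
        = ∫ ξ, remK K u ξ ∂(μ n) + pair u (bs n)
          + (1/2 : ℂ) * ∫ ξ, pair u (ctrunc ξ) ^ 2 ∂(μ n) := by
    intro u K hK h n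
    have i1 : Integrable (remK K u) (μ n) :=
      Integrable.of_bound (continuous_remK K u).aestronglyMeasurable _
        (ae_of_all _ (norm_remK_le K u))
    have i2 : Integrable (fun ξ => pair u (ctrunc ξ)) (μ n) :=
      (pairL u).integrable_comp (integrable_ctrunc (μ n))
    have i3 : Integrable (fun ξ => (1/2 : ℂ) * pair u (ctrunc ξ) ^ 2) (μ n) :=
      (((hwi n).const_mul _).mono' (by fun_prop)
        (ae_of_all _ (norm_pair_ctrunc_sq_le u))).const_mul _
    rw [← integral_pair_comp _ _ (integrable_ctrunc (μ n)), ← integral_const_mul,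
      ← integral_add i1 i2,
      ← integral_add (f := fun ξ => remK K u ξ + pair u (ctrunc ξ)) (i1.add i2) i3]
    refine integral_congr_ae ((h n).mono fun ξ hξ => ?_)
    simp only [remK, cexpK_of_le hξ]
    ring
  have hK1 : ∀ u ∈ U, ∃ K : ℝ, 1 ≤ K ∧ ∀ n, ∀ᵐ ξ ∂(μ n), (pair u ξ).re ≤ K := fun u hu => by
    obtain ⟨K, hK⟩ := hU u hu
    exact ⟨max 1 K, le_max_left _ _, fun n => (hK n).mono fun ξ hξ => hξ.trans (le_max_right _ _)⟩
  have hpair : ∀ u ∈ U, ∃ c, Tendsto (fun n => pair u (bs n)) l (𝓝 c) := by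
    intro u hu
    obtain ⟨K, hK, h⟩ := hK1 u hu
    refine ⟨_, ((((hη u hu).mono_left hl).sub (hrem K hK u)).sub
      ((hquad u).const_mul (1/2))).congr fun n => ?_⟩
    rw [hsplit u K hK h n]; ring
  have hb : ∀ i, ∃ c, Tendsto (fun n => bs n i) l (𝓝 c) := by
    intro i
    obtain ⟨c, hc⟩ := hpair _ (him (e i))
    refine ⟨c.im, ((Complex.continuous_im.tendsto _).comp hc).congr fun n => ?_⟩
    have := hin i 1 (bs n)
    rw [one_smul, one_mul] at this
    simp [pair_imv, this]
  choose b hb using hb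
  let bv : EuclideanSpace ℝ (Fin d) := WithLp.toLp 2 b
  have hbv : ∀ u, Tendsto (fun n => pair u (bs n)) l (𝓝 (pair u bv)) := fun u =>
    tendsto_finsetSum _ fun i _ =>
      ((Complex.continuous_ofReal.tendsto _).comp (hb i)).const_mul _
  let A : Matrix (Fin d) (Fin d) ℝ := fun i j => Γ i j - ∫ ξ, ctrunc ξ i * ctrunc ξ j ∂ν
  refine ⟨A, bv + ∫ ξ, (trunc ξ - ctrunc ξ) ∂ν, ν, ?_, hν, ?_⟩
  · refine posSemidef_of_quadratic (fun i j => ?_) fun v => ?_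
    · simp only [A, hΓs i j, mul_comm (ctrunc _ i)]
    · have hQ : Tendsto (fun n => ∫ ξ, (inner ℝ (ctrunc ξ) v : ℝ) ^ 2 ∂(μ n)) l
          (𝓝 (∑ i, ∑ j, v i * Γ i j * v j)) := by
        simp_rw [fun n => integral_inner_ctrunc_sq (μ n) (hwi n) v]
        exact tendsto_finsetSum _ fun i _ => tendsto_finsetSum _ fun j _ =>
          ((hΓ i j).const_mul _).mul_const _
      have h1 := integral_levy_le_limit μ l κ ν hν
        (fun f => integral_withDensity_eq_integral_smul hmw f) hκR v _ hQ
      rw [integral_inner_ctrunc_sq ν hν.integrable_wt] at h1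
      simp only [A, mul_sub, sub_mul, Finset.sum_sub_distrib]
      linarith
  · intro u hu
    obtain ⟨K, hK, h⟩ := hK1 u hu
    have hae : ∀ᵐ ξ ∂ν, (pair u ξ).re ≤ K :=
      (withDensity_absolutelyContinuous _ _).ae_le
        (ae_le_of_weak_limit μ l κ hκR (g := fun ξ => (pair u ξ).re) (by fun_prop) h)
    rw [lkExp_eq_of_ae_le _ _ hν hK hae, add_sub_cancel_right]
    refine tendsto_nhds_unique ((hη u hu).mono_left hl) ?_
    simp_rw [hsplit u K hK h]
    have := ((hrem K hK u).add (hbv u)).add ((hquad u).const_mul (1/2))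
    simpa only [A, sub_add_cancel] using this

/-! ### Uniqueness of the characteristics -/

lemma re_pair_imv (θ ξ : EuclideanSpace ℝ (Fin d)) : (pair (imv θ) ξ).re = 0 := by
  simp [pair_imv]

/-- The density `1 - cos ⟨ξ, e⟩`, which makes every Lévy measure finite. -/
def cosDens (e ξ : EuclideanSpace ℝ (Fin d)) : NNReal := (1 - Real.cos (inner ℝ ξ e)).toNNReal

lemma coe_cosDens (e ξ : EuclideanSpace ℝ (Fin d)) :
    (cosDens e ξ : ℝ) = 1 - Real.cos (inner ℝ ξ e) :=
  Real.coe_toNNReal _ (by linarith [Real.cos_le_one (inner ℝ ξ e)])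

@[fun_prop]
lemma measurable_cosDens (e : EuclideanSpace ℝ (Fin d)) : Measurable (cosDens e) := by
  have : Continuous (cosDens e) := by unfold cosDens; fun_prop
  exact this.measurable

lemma cosDens_le (e ξ : EuclideanSpace ℝ (Fin d)) :
    (cosDens e ξ : ℝ) ≤ (2 + ‖e‖ ^ 2) * wt ξ := by
  rw [coe_cosDens]
  rcases le_total ‖ξ‖ 1 with h | h
  · rw [wt_of_le h]
    have h1 := Real.one_sub_sq_div_two_le_cos (x := inner ℝ ξ e)
    have h2 : (inner ℝ ξ e : ℝ) ^ 2 ≤ (‖ξ‖ * ‖e‖) ^ 2 :=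
      sq_le_sq' (neg_le_of_abs_le (abs_real_inner_le_norm _ _))
        (le_of_abs_le (abs_real_inner_le_norm _ _))
    nlinarith [sq_nonneg ‖ξ‖, sq_nonneg (‖ξ‖ * ‖e‖)]
  · rw [wt_of_ge h]
    nlinarith [Real.neg_one_le_cos (inner ℝ ξ e), sq_nonneg ‖e‖]

/-- The quadratic form of a real matrix. -/
def quad (A : Matrix (Fin d) (Fin d) ℝ) (v : EuclideanSpace ℝ (Fin d)) : ℝ :=
  ∑ i, ∑ j, v i * A i j * v j

lemma quad_nonneg {A : Matrix (Fin d) (Fin d) ℝ} (hA : A.PosSemidef)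
    (v : EuclideanSpace ℝ (Fin d)) : 0 ≤ quad A v := by
  have := hA.dotProduct_mulVec_nonneg v
  simpa [quad, dotProduct, Matrix.mulVec, Finset.mul_sum, mul_assoc] using this

lemma quad_parallelogram (A : Matrix (Fin d) (Fin d) ℝ) (v w : EuclideanSpace ℝ (Fin d)) :
    quad A (v + w) + quad A (v - w) = 2 * quad A v + 2 * quad A w := by
  simp only [quad, Finset.mul_sum, ← Finset.sum_add_distrib]
  refine Finset.sum_congr rfl fun i _ => Finset.sum_congr rfl fun j _ => ?_
  simp only [PiLp.add_apply, PiLp.sub_apply]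
  ring

lemma eq_of_quad_eq {A₁ A₂ : Matrix (Fin d) (Fin d) ℝ} (h₁ : A₁.PosSemidef) (h₂ : A₂.PosSemidef)
    (h : ∀ v, quad A₁ v = quad A₂ v) : A₁ = A₂ := by
  have key : ∀ {A A' : Matrix (Fin d) (Fin d) ℝ}, A.PosSemidef → A'.PosSemidef →
      (∀ v, quad A v = quad A' v) → (A' - A).PosSemidef := by
    intro A A' hA hA' h
    refine posSemidef_of_quadratic (fun i j => ?_) fun v => ?_
    · have h1 := hA.1.apply i j
      have h2 := hA'.1.apply i j
      simp only [star_trivial] at h1 h2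
      simp [h1, h2]
    · have h3 := h v
      simp only [quad] at h3
      simp only [Matrix.sub_apply, mul_sub, sub_mul, Finset.sum_sub_distrib, h3, sub_self, le_refl]
  open scoped MatrixOrder in
  exact le_antisymm (Matrix.le_iff.2 (key h₁ h₂ h)) (Matrix.le_iff.2 (key h₂ h₁ fun v => (h v).symm))

lemma lkExp_imv (A : Matrix (Fin d) (Fin d) ℝ) (B : EuclideanSpace ℝ (Fin d))
    (ν : Measure (EuclideanSpace ℝ (Fin d))) (θ : EuclideanSpace ℝ (Fin d)) :
    lkExp A B ν (imv θ) = -(1/2 : ℂ) * quad A θ + pair (imv θ) B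
      + ∫ ξ, (Complex.exp (pair (imv θ) ξ) - 1 - pair (imv θ) (trunc ξ)) ∂ν := by
  have : ∑ i, ∑ j, imv θ i * (A i j : ℂ) * imv θ j = -(quad A θ : ℂ) := by
    simp only [quad, Complex.ofReal_sum, ← Finset.sum_neg_distrib, imv_apply]
    refine Finset.sum_congr rfl fun i _ => Finset.sum_congr rfl fun j _ => ?_
    push_cast
    linear_combination (θ i * A i j * θ j : ℂ) * Complex.I_sq
  rw [lkExp, this]; ring

/-- The finite measure whose characteristic function is the second difference in direction `e`
of the Lévy–Khintchine exponent. -/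
def diffMeas (A : Matrix (Fin d) (Fin d) ℝ) (ν : Measure (EuclideanSpace ℝ (Fin d)))
    (e : EuclideanSpace ℝ (Fin d)) : Measure (EuclideanSpace ℝ (Fin d)) :=
  ν.withDensity (fun ξ => (cosDens e ξ : ENNReal))
    + (quad A e / 2).toNNReal • Measure.dirac 0

lemma IsLevy.isFiniteMeasure_cosDens {ν : Measure (EuclideanSpace ℝ (Fin d))} (hν : IsLevy ν)
    (e : EuclideanSpace ℝ (Fin d)) :
    IsFiniteMeasure (ν.withDensity (fun ξ => (cosDens e ξ : ENNReal))) := by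
  have hi : Integrable (fun ξ => (cosDens e ξ : ℝ)) ν :=
    hν.integrable (by fun_prop) (ae_of_all _ fun ξ => by
      rw [Real.norm_of_nonneg (by positivity)]; exact cosDens_le e ξ)
  refine isFiniteMeasure_withDensity ?_
  have := hi.lintegral_lt_top
  simpa using this.ne

/-- The second difference of a Lévy–Khintchine exponent in a fixed direction is a characteristic
function: it kills the drift, and turns `ν` into a finite measure with density
`1 - cos ⟨ξ, e⟩` and the Gaussian part into an atom at the origin. -/
lemma charFun_diffMeas {A : Matrix (Fin d) (Fin d) ℝ} (hA : A.PosSemidef)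
    (B : EuclideanSpace ℝ (Fin d)) {ν : Measure (EuclideanSpace ℝ (Fin d))} (hν : IsLevy ν)
    (e θ : EuclideanSpace ℝ (Fin d)) :
    charFun (diffMeas A ν e) θ = lkExp A B ν (imv θ)
      - (1/2 : ℂ) * (lkExp A B ν (imv (θ + e)) + lkExp A B ν (imv (θ - e))) := by
  have := hν.isFiniteMeasure_cosDens e
  have hint : ∀ (m : Measure (EuclideanSpace ℝ (Fin d))) [IsFiniteMeasure m],
      Integrable (fun ξ : EuclideanSpace ℝ (Fin d) =>
        Complex.exp ((inner ℝ ξ θ : ℝ) * Complex.I)) m := fun m _ =>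
    Integrable.of_bound (C := 1) (by fun_prop)
      (ae_of_all _ fun ξ => by rw [Complex.norm_exp_ofReal_mul_I])
  have hI : ∀ θ : EuclideanSpace ℝ (Fin d), Integrable (fun ξ =>
      Complex.exp (pair (imv θ) ξ) - 1 - pair (imv θ) (trunc ξ)) ν := fun θ =>
    hν.integrable_integrand (K := 0) (ae_of_all _ fun ξ => (re_pair_imv θ ξ).le)
  rw [charFun_apply, diffMeas, integral_add_measure (hint _) (hint _),
    integral_withDensity_eq_integral_smul (measurable_cosDens e), integral_smul_nnreal_measure,
    integral_dirac, lkExp_imv, lkExp_imv, lkExp_imv]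
  have hJ : ∫ ξ, cosDens e ξ • Complex.exp ((inner ℝ ξ θ : ℝ) * Complex.I) ∂ν
      = ∫ ξ, (Complex.exp (pair (imv θ) ξ) - 1 - pair (imv θ) (trunc ξ)) ∂ν
      - (1/2 : ℂ) * (∫ ξ, (Complex.exp (pair (imv (θ + e)) ξ) - 1
          - pair (imv (θ + e)) (trunc ξ)) ∂ν
        + ∫ ξ, (Complex.exp (pair (imv (θ - e)) ξ) - 1 - pair (imv (θ - e)) (trunc ξ)) ∂ν) := by
    let J : EuclideanSpace ℝ (Fin d) → EuclideanSpace ℝ (Fin d) → ℂ := fun θ ξ =>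
      Complex.exp (pair (imv θ) ξ) - 1 - pair (imv θ) (trunc ξ)
    have hJ2 : Integrable (fun ξ => (1/2 : ℂ) * (J (θ + e) ξ + J (θ - e) ξ)) ν :=
      ((hI (θ + e)).add (hI (θ - e))).const_mul _
    rw [← integral_add (hI _) (hI _), ← integral_const_mul, ← integral_sub (hI _) hJ2]
    refine integral_congr_ae (ae_of_all _ fun ξ => ?_)
    simp only [J, NNReal.smul_def, coe_cosDens, pair_imv, inner_add_right, inner_sub_right]
    rw [Complex.real_smul]
    push_cast
    simp only [add_mul, sub_eq_add_neg, neg_mul, Complex.exp_add, Complex.cos]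
    ring
  have hq := quad_parallelogram A θ e
  have hq' : (quad A (θ + e) : ℂ) + quad A (θ - e) = 2 * quad A θ + 2 * quad A e := by
    exact_mod_cast hq
  have hp : pair (imv (θ + e)) B + pair (imv (θ - e)) B = 2 * pair (imv θ) B := by
    simp only [pair_imv, inner_add_right, inner_sub_right]
    push_cast; ring
  rw [hJ, NNReal.smul_def, Real.coe_toNNReal _ (by linarith [quad_nonneg hA e])]
  simp only [inner_zero_left, Complex.ofReal_zero, zero_mul, Complex.exp_zero, Complex.real_smul,
    mul_one]
  push_cast
  linear_combination (-1/4 : ℂ) * hq' + (1/2 : ℂ) * hp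

/-- The measure `ν` is recovered from `(1 - cos ⟨ξ, e⟩) ν` wherever the density does not vanish. -/
lemma measure_inter_eq_lintegral (ν : Measure (EuclideanSpace ℝ (Fin d)))
    (e : EuclideanSpace ℝ (Fin d)) {E : Set (EuclideanSpace ℝ (Fin d))} (hE : MeasurableSet E) :
    ν (E ∩ {ξ | cosDens e ξ ≠ 0}) = ∫⁻ ξ in E, ((cosDens e ξ)⁻¹ : NNReal)
      ∂(ν.withDensity fun ξ => (cosDens e ξ : ENNReal)) := by
  have hS : MeasurableSet {ξ | cosDens e ξ ≠ 0} :=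
    (measurableSet_singleton (0 : NNReal)).compl.preimage (measurable_cosDens e)
  rw [restrict_withDensity hE, lintegral_withDensity_eq_lintegral_mul _ (by fun_prop)
    (by fun_prop), Set.inter_comm, ← Measure.restrict_apply hS, ← lintegral_indicator_one hS]
  refine lintegral_congr fun ξ => ?_
  by_cases h : cosDens e ξ = 0
  · simp [h]
  · have : ξ ∈ {ξ | cosDens e ξ ≠ 0} := h
    rw [Set.indicator_of_mem this]
    simp only [Pi.mul_apply, Pi.one_apply]
    rw [← ENNReal.coe_mul, mul_inv_cancel₀ h, ENNReal.coe_one]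

/-- Uniqueness of the characteristics in the Lévy–Khintchine formula. -/
lemma lk_unique {A₁ A₂ : Matrix (Fin d) (Fin d) ℝ} {B₁ B₂ : EuclideanSpace ℝ (Fin d)}
    {ν₁ ν₂ : Measure (EuclideanSpace ℝ (Fin d))} (hA₁ : A₁.PosSemidef) (hA₂ : A₂.PosSemidef)
    (hν₁ : IsLevy ν₁) (hν₂ : IsLevy ν₂)
    (h : ∀ θ, lkExp A₁ B₁ ν₁ (imv θ) = lkExp A₂ B₂ ν₂ (imv θ)) :
    A₁ = A₂ ∧ B₁ = B₂ ∧ ν₁ = ν₂ := by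
  have hfin : ∀ {A : Matrix (Fin d) (Fin d) ℝ} {ν : Measure (EuclideanSpace ℝ (Fin d))},
      IsLevy ν → ∀ e, IsFiniteMeasure (diffMeas A ν e) := fun hν e => by
    have := hν.isFiniteMeasure_cosDens e
    unfold diffMeas; infer_instance
  have hρ : ∀ e, diffMeas A₁ ν₁ e = diffMeas A₂ ν₂ e := fun e => by
    have := hfin (A := A₁) hν₁ e
    have := hfin (A := A₂) hν₂ e
    refine Measure.ext_of_charFun (funext fun θ => ?_)
    rw [charFun_diffMeas hA₁ B₁ hν₁, charFun_diffMeas hA₂ B₂ hν₂, h, h, h]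
  -- The atom of `diffMeas` at the origin is the Gaussian part.
  have hatom : ∀ {A : Matrix (Fin d) (Fin d) ℝ} {ν : Measure (EuclideanSpace ℝ (Fin d))},
      IsLevy ν → ∀ e, diffMeas A ν e {0} = (quad A e / 2).toNNReal := fun hν e => by
    have h0 := withDensity_absolutelyContinuous _ (fun ξ => (cosDens e ξ : ENNReal)) hν.1
    rw [diffMeas, Measure.add_apply, h0, zero_add, Measure.smul_apply,
      Measure.dirac_apply_of_mem (Set.mem_singleton _), ENNReal.smul_def, smul_eq_mul, mul_one]
  have hq : ∀ e, quad A₁ e = quad A₂ e := fun e => by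
    have h1 := hatom (A := A₁) hν₁ e
    rw [hρ e, hatom hν₂ e, ENNReal.coe_inj] at h1
    have := (Real.toNNReal_eq_toNNReal_iff (by linarith [quad_nonneg hA₂ e])
      (by linarith [quad_nonneg hA₁ e])).1 h1
    linarith
  have hA := eq_of_quad_eq hA₁ hA₂ hq
  have hd : ∀ e, ν₁.withDensity (fun ξ => (cosDens e ξ : ENNReal))
      = ν₂.withDensity (fun ξ => (cosDens e ξ : ENNReal)) := fun e => by
    ext E hE
    have h1 := congrArg (fun m => m E) (hρ e)
    simp only [diffMeas, Measure.add_apply, hq e] at h1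
    exact (ENNReal.add_left_inj (measure_ne_top _ _)).1 h1
  have hν : ν₁ = ν₂ := by
    -- The sets where the densities do not vanish cover the complement of the origin.
    let e : Fin d × ℕ → EuclideanSpace ℝ (Fin d) := fun k =>
      ((k.2 : ℝ) + 1)⁻¹ • EuclideanSpace.single k.1 1
    let s : Option (Fin d × ℕ) → Set (EuclideanSpace ℝ (Fin d)) := fun o =>
      o.elim {0} fun k => {ξ | cosDens (e k) ξ ≠ 0}
    have hs : ⋃ o, s o = Set.univ := by
      refine Set.eq_univ_of_forall fun ξ => Set.mem_iUnion.2 ?_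
      by_cases hξ : ξ = 0
      · exact ⟨none, hξ⟩
      obtain ⟨i, hi⟩ : ∃ i, ξ i ≠ 0 := by
        by_contra hcon
        push Not at hcon
        exact hξ (by ext i; simp [hcon i])
      obtain ⟨m, hm⟩ := exists_nat_ge |ξ i|
      refine ⟨some (i, m), ?_⟩
      show cosDens (e (i, m)) ξ ≠ 0
      have hin : (inner ℝ ξ (e (i, m)) : ℝ) = ((m : ℝ) + 1)⁻¹ * ξ i := by
        simp only [e]
        rw [inner_smul_right]; simp [EuclideanSpace.inner_single_right]
      intro h0
      have h1 := coe_cosDens (e (i, m)) ξ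
      rw [h0, hin, NNReal.coe_zero] at h1
      have hlt : |((m : ℝ) + 1)⁻¹ * ξ i| < 1 := by
        rw [abs_mul, abs_of_pos (by positivity), inv_mul_lt_iff₀ (by positivity)]
        linarith
      have hpi := Real.pi_gt_three
      obtain ⟨h2, h3⟩ := abs_lt.1 hlt
      have h4 := (Real.cos_eq_one_iff_of_lt_of_lt (by linarith) (by linarith)).1
        (show Real.cos (((m : ℝ) + 1)⁻¹ * ξ i) = 1 by linarith)
      have : ((m : ℝ) + 1)⁻¹ ≠ 0 := by positivity
      exact (mul_ne_zero this hi) h4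
    rw [Measure.ext_iff_of_iUnion_eq_univ hs]
    rintro (_ | k)
    · simp only [s, Option.elim_none]
      rw [Measure.restrict_eq_zero.2 hν₁.1, Measure.restrict_eq_zero.2 hν₂.1]
    · ext E hE
      rw [Measure.restrict_apply hE, Measure.restrict_apply hE]
      show ν₁ (E ∩ {ξ | cosDens (e k) ξ ≠ 0}) = ν₂ (E ∩ {ξ | cosDens (e k) ξ ≠ 0})
      rw [measure_inter_eq_lintegral _ _ hE, measure_inter_eq_lintegral _ _ hE, hd]
  refine ⟨hA, ?_, hν⟩
  refine ext_inner_right ℝ fun θ => ?_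
  have h1 := h θ
  rw [lkExp, lkExp, hA, hν] at h1
  have h2 : pair (imv θ) B₁ = pair (imv θ) B₂ := by
    simpa using h1
  rw [pair_imv, pair_imv] at h2
  exact_mod_cast mul_right_cancel₀ Complex.I_ne_zero h2

/-! ### Affine relations and generator limits -/

lemma IsLevy.add {ν₁ ν₂ : Measure (EuclideanSpace ℝ (Fin d))} (h₁ : IsLevy ν₁)
    (h₂ : IsLevy ν₂) : IsLevy (ν₁ + ν₂) := by
  refine ⟨by simp [h₁.1, h₂.1], ?_⟩
  rw [lintegral_add_measure]
  exact ENNReal.add_lt_top.2 ⟨h₁.2, h₂.2⟩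

lemma IsLevy.smul {ν : Measure (EuclideanSpace ℝ (Fin d))} (h : IsLevy ν) (c : NNReal) :
    IsLevy (c • ν) := by
  refine ⟨by simp [h.1], ?_⟩
  rw [lintegral_smul_measure]
  exact ENNReal.mul_lt_top ENNReal.coe_lt_top h.2

lemma IsLevy.measure_lt_top {ν : Measure (EuclideanSpace ℝ (Fin d))} (h : IsLevy ν)
    {E : Set (EuclideanSpace ℝ (Fin d))} (hE : (0 : EuclideanSpace ℝ (Fin d)) ∉ closure E) :
    ν E < ⊤ := by
  obtain ⟨r, hr, hrE⟩ := Metric.isOpen_iff.1 isClosed_closure.isOpen_compl 0 hE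
  have h1 := h.integrable_wt.measure_ge_lt_top (ε := min (r ^ 2) 1) (by positivity)
  refine (measure_mono fun ξ hξ => ?_).trans_lt h1
  show min (r ^ 2) 1 ≤ (wt ξ : ℝ)
  rw [coe_wt]
  have : r ≤ ‖ξ‖ := by
    by_contra hcon
    push Not at hcon
    exact hrE (mem_ball_zero_iff.2 hcon) (subset_closure hξ)
  gcongr

lemma lkExp_add_imv (A₁ A₂ : Matrix (Fin d) (Fin d) ℝ) (B₁ B₂ : EuclideanSpace ℝ (Fin d))
    {ν₁ ν₂ : Measure (EuclideanSpace ℝ (Fin d))} (h₁ : IsLevy ν₁) (h₂ : IsLevy ν₂)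
    (θ : EuclideanSpace ℝ (Fin d)) :
    lkExp (A₁ + A₂) (B₁ + B₂) (ν₁ + ν₂) (imv θ)
      = lkExp A₁ B₁ ν₁ (imv θ) + lkExp A₂ B₂ ν₂ (imv θ) := by
  have hI : ∀ {ν : Measure (EuclideanSpace ℝ (Fin d))}, IsLevy ν → Integrable (fun ξ =>
      Complex.exp (pair (imv θ) ξ) - 1 - pair (imv θ) (trunc ξ)) ν := fun hν =>
    hν.integrable_integrand (K := 0) (ae_of_all _ fun ξ => (re_pair_imv θ ξ).le)
  simp only [lkExp]
  rw [integral_add_measure (hI h₁) (hI h₂), pair_add]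
  simp only [Matrix.add_apply, Complex.ofReal_add, mul_add, add_mul, Finset.sum_add_distrib]
  ring

lemma lkExp_smul (c : NNReal) (A : Matrix (Fin d) (Fin d) ℝ) (B : EuclideanSpace ℝ (Fin d))
    (ν : Measure (EuclideanSpace ℝ (Fin d))) (u : EuclideanSpace ℂ (Fin d)) :
    lkExp ((c : ℝ) • A) ((c : ℝ) • B) (c • ν) u = (c : ℝ) * lkExp A B ν u := by
  have : ∑ i, ∑ j, u i * ((((c : ℝ) • A) i j : ℝ) : ℂ) * u j
      = (c : ℝ) * ∑ i, ∑ j, u i * (A i j : ℂ) * u j := by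
    simp only [Finset.mul_sum]
    refine Finset.sum_congr rfl fun i _ => Finset.sum_congr rfl fun j _ => ?_
    rw [Matrix.smul_apply, smul_eq_mul, Complex.ofReal_mul]; ring
  simp only [lkExp]
  rw [integral_smul_nnreal_measure, pair_smul, this, NNReal.smul_def, Complex.real_smul]
  ring

lemma lkExp_zero (A : Matrix (Fin d) (Fin d) ℝ) (B : EuclideanSpace ℝ (Fin d))
    (ν : Measure (EuclideanSpace ℝ (Fin d))) : lkExp A B ν 0 = 0 := by
  simp [lkExp, pair]

/-- An affine relation between Lévy–Khintchine exponents passes to the characteristics. Negative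
coefficients are moved to the other side before uniqueness is applied. -/
lemma lk_affine {A₁ A₂ A₃ : Matrix (Fin d) (Fin d) ℝ} {B₁ B₂ B₃ : EuclideanSpace ℝ (Fin d)}
    {ν₁ ν₂ ν₃ : Measure (EuclideanSpace ℝ (Fin d))} (hA₁ : A₁.PosSemidef) (hA₂ : A₂.PosSemidef)
    (hA₃ : A₃.PosSemidef) (hν₁ : IsLevy ν₁) (hν₂ : IsLevy ν₂) (hν₃ : IsLevy ν₃) (r s : ℝ)
    (h : ∀ θ, lkExp A₁ B₁ ν₁ (imv θ) = r * lkExp A₂ B₂ ν₂ (imv θ) + s * lkExp A₃ B₃ ν₃ (imv θ)) :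
    A₁ = r • A₂ + s • A₃ ∧ B₁ = r • B₂ + s • B₃ ∧
      ∀ E : Set (EuclideanSpace ℝ (Fin d)), (0 : EuclideanSpace ℝ (Fin d)) ∉ closure E →
        (ν₁ E).toReal = r * (ν₂ E).toReal + s * (ν₃ E).toReal := by
  obtain ⟨a, c, rfl⟩ : ∃ a c : NNReal, r = c - a :=
    ⟨(-r).toNNReal, r.toNNReal, by
      rw [Real.coe_toNNReal', Real.coe_toNNReal']
      rcases le_total 0 r with hr | hr
      · simp [hr]
      · simp [hr]⟩
  obtain ⟨b, e, rfl⟩ : ∃ b e : NNReal, s = e - b :=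
    ⟨(-s).toNNReal, s.toNNReal, by
      rw [Real.coe_toNNReal', Real.coe_toNNReal']
      rcases le_total 0 s with hr | hr
      · simp [hr]
      · simp [hr]⟩
  obtain ⟨h1, h2, h3⟩ := lk_unique
    (A₁ := A₁ + ((a : ℝ) • A₂ + (b : ℝ) • A₃)) (A₂ := (c : ℝ) • A₂ + (e : ℝ) • A₃)
    (B₁ := B₁ + ((a : ℝ) • B₂ + (b : ℝ) • B₃)) (B₂ := (c : ℝ) • B₂ + (e : ℝ) • B₃)
    (ν₁ := ν₁ + (a • ν₂ + b • ν₃)) (ν₂ := c • ν₂ + e • ν₃)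
    (hA₁.add ((hA₂.smul a.2).add (hA₃.smul b.2))) ((hA₂.smul c.2).add (hA₃.smul e.2))
    (hν₁.add ((hν₂.smul a).add (hν₃.smul b))) ((hν₂.smul c).add (hν₃.smul e)) fun θ => by
      rw [lkExp_add_imv _ _ _ _ hν₁ ((hν₂.smul a).add (hν₃.smul b)),
        lkExp_add_imv _ _ _ _ (hν₂.smul a) (hν₃.smul b),
        lkExp_add_imv _ _ _ _ (hν₂.smul c) (hν₃.smul e), lkExp_smul, lkExp_smul, lkExp_smul,
        lkExp_smul, h]
      push_cast
      ring
  refine ⟨?_, ?_, fun E hE => ?_⟩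
  · rw [eq_sub_of_add_eq h1]; module
  · rw [eq_sub_of_add_eq h2]; module
  · have h4 := congrArg (fun m => m.real E) h3
    have f₁ := (hν₁.measure_lt_top hE).ne
    have f₂ := (hν₂.measure_lt_top hE).ne
    have f₃ := (hν₃.measure_lt_top hE).ne
    have g : ∀ {ν : Measure (EuclideanSpace ℝ (Fin d))} (k : NNReal), ν E ≠ ⊤ →
        (k • ν) E ≠ ⊤ := fun k hf => by
      rw [Measure.smul_apply, ENNReal.smul_def, smul_eq_mul]
      exact ENNReal.mul_ne_top ENNReal.coe_ne_top hf
    have g' : ∀ (ν : Measure (EuclideanSpace ℝ (Fin d))) (k : NNReal),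
        ((k • ν) E).toReal = k * (ν E).toReal := fun ν k => by
      rw [Measure.smul_apply, ENNReal.smul_def, smul_eq_mul, ENNReal.toReal_mul,
        ENNReal.coe_toReal]
    simp only [measureReal_def, Measure.add_apply] at h4
    rw [ENNReal.toReal_add f₁ (ENNReal.add_ne_top.2 ⟨g a f₂, g b f₃⟩),
      ENNReal.toReal_add (g a f₂) (g b f₃), ENNReal.toReal_add (g c f₂) (g e f₃),
      g', g', g', g'] at h4
    linarith

lemma pair_zero_left (x : EuclideanSpace ℝ (Fin d)) : pair 0 x = 0 := by simp [pair]

/-- The generator limit at a fixed state `x`, for a single family of sub-probability measures. -/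
lemma exists_characteristics {D : Set (EuclideanSpace ℝ (Fin d))} (hD : MeasurableSet D)
    (x : EuclideanSpace ℝ (Fin d)) (p : ℝ → Measure (EuclideanSpace ℝ (Fin d)))
    (hp : ∀ t, 0 < t → p t Set.univ ≤ 1) (ψ : EuclideanSpace ℂ (Fin d) → ℂ)
    (hψ : Continuous fun θ => ψ (imv θ))
    (hlim : ∀ u ∈ Uset d D, Tendsto (fun t : ℝ =>
      (t : ℂ)⁻¹ * ((∫ ξ in D, Complex.exp (pair u (ξ - x)) ∂(p t)) - 1)) (𝓝[>] 0) (𝓝 (ψ u))) :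
    ∃ (A : Matrix (Fin d) (Fin d) ℝ) (B : EuclideanSpace ℝ (Fin d)) (C : ℝ)
      (ν : Measure (EuclideanSpace ℝ (Fin d))), A.PosSemidef ∧ 0 ≤ C ∧ IsLevy ν ∧
      ∀ u ∈ Uset d D, ψ u = lkExp A B ν u - C := by
  let t : ℕ → ℝ := fun n => 1 / ((n : ℝ) + 1)
  have ht0 : ∀ n, 0 < t n := fun n => by positivity
  have ht : Tendsto t atTop (𝓝[>] 0) := tendsto_nhdsWithin_iff.2
    ⟨tendsto_one_div_add_atTop_nhds_zero_nat, Eventually.of_forall ht0⟩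
  have hfin : ∀ n, IsFiniteMeasure (p (t n)) := fun n =>
    ⟨(hp _ (ht0 n)).trans_lt ENNReal.one_lt_top⟩
  have him : ∀ θ, imv θ ∈ Uset d D := fun θ => ⟨0, fun ξ _ => (re_pair_imv θ ξ).le⟩
  have h0 : (0 : EuclideanSpace ℂ (Fin d)) ∈ Uset d D := imv_zero (d := d) ▸ him 0
  let μ : ℕ → Measure (EuclideanSpace ℝ (Fin d)) := fun n =>
    (t n)⁻¹.toNNReal • ((p (t n)).restrict D).map fun ξ => ξ - x
  have hμ : ∀ n, IsFiniteMeasure (μ n) := fun n => by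
    simp only [μ]; infer_instance
  have hms : Measurable fun ξ : EuclideanSpace ℝ (Fin d) => ξ - x := by fun_prop
  have hbd : ∀ u ∈ Uset d D, ∃ K : ℝ, ∀ ξ ∈ D, (pair u (ξ - x)).re ≤ K := by
    rintro u ⟨C, hC⟩
    refine ⟨C - (pair u x).re, fun ξ hξ => ?_⟩
    rw [pair_sub, Complex.sub_re]
    linarith [hC ξ hξ]
  have hU : ∀ u ∈ Uset d D, ∃ K : ℝ, ∀ n, ∀ᵐ ξ ∂(μ n), (pair u ξ).re ≤ K := by
    intro u hu
    obtain ⟨K, hK⟩ := hbd u hu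
    refine ⟨K, fun n => Measure.ae_smul_measure ?_ _⟩
    rw [ae_map_iff hms.aemeasurable
      (measurableSet_le (by fun_prop : Measurable fun ξ => (pair u ξ).re) measurable_const)]
    exact (ae_restrict_mem hD).mono hK
  have hη : ∀ u ∈ Uset d D, Tendsto (fun n => ∫ ξ, (Complex.exp (pair u ξ) - 1) ∂(μ n)) atTop
      (𝓝 (ψ u - ψ 0)) := by
    intro u hu
    refine (((hlim u hu).comp ht).sub ((hlim 0 h0).comp ht)).congr fun n => ?_
    obtain ⟨K, hK⟩ := hbd u hu
    have hi : Integrable (fun ξ => Complex.exp (pair u (ξ - x))) ((p (t n)).restrict D) := by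
      refine Integrable.of_bound (C := Real.exp K) (by fun_prop) ?_
      filter_upwards [ae_restrict_mem hD] with ξ hξ
      rw [Complex.norm_exp]
      exact Real.exp_le_exp.2 (hK ξ hξ)
    simp only [μ, Function.comp_apply]
    rw [integral_smul_nnreal_measure, integral_map hms.aemeasurable (by fun_prop),
      integral_sub hi (integrable_const _), NNReal.smul_def,
      Real.coe_toNNReal _ (inv_nonneg.2 (ht0 n).le), Complex.real_smul]
    simp only [pair_zero_left, Complex.exp_zero]
    push_cast
    ring
  -- The total mass at `u = 0` determines the killing rate.
  have hzero : ∀ n, ((t n : ℂ)⁻¹ *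
      ((∫ ξ in D, Complex.exp (pair 0 (ξ - x)) ∂(p (t n))) - 1))
        = (((t n)⁻¹ * ((p (t n)).real D - 1) : ℝ) : ℂ) := fun n => by
    simp only [pair_zero_left, Complex.exp_zero]
    simp
  have hlim0 : Tendsto (fun n => (((t n)⁻¹ * ((p (t n)).real D - 1) : ℝ) : ℂ)) atTop
      (𝓝 (ψ 0)) := ((hlim 0 h0).comp ht).congr hzero
  have hre : (ψ 0).re ≤ 0 := by
    refine le_of_tendsto' ((Complex.continuous_re.tendsto _).comp hlim0) fun n => ?_
    simp only [Function.comp_apply, Complex.ofReal_re]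
    have h1 : (p (t n)).real D ≤ 1 := by
      refine ENNReal.toReal_le_of_le_ofReal zero_le_one ?_
      rw [ENNReal.ofReal_one]
      exact (measure_mono (Set.subset_univ _)).trans (hp _ (ht0 n))
    exact mul_nonpos_of_nonneg_of_nonpos (inv_nonneg.2 (ht0 n).le) (by linarith)
  have him0 : (ψ 0).im = 0 := by
    refine tendsto_nhds_unique ((Complex.continuous_im.tendsto _).comp hlim0)
      (tendsto_const_nhds.congr fun n => ?_)
    simp only [Function.comp_apply, Complex.ofReal_im]
  obtain ⟨A, B, ν, hA, hν, h⟩ := exists_levy μ (Uset d D) hU him (fun u => ψ u - ψ 0) hη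
    (hψ.sub continuous_const).continuousAt
  refine ⟨A, B, -(ψ 0).re, ν, hA, by linarith, hν, fun u hu => ?_⟩
  rw [← h u hu]
  have : ψ 0 = ((ψ 0).re : ℂ) := Complex.ext (by simp) (by simp [him0])
  rw [Complex.ofReal_neg, ← this]
  ring

/-- Proposition 3.1 of the paper: if `F, R` are continuous on each `𝒰_k`
and `F(u) + ⟨x,R(u)⟩ = lim_{t→0+} (1/t)(∫_D e^{⟨ξ−x,u⟩} p_t(x,dξ) − 1)` for a family of
sub-probability kernels on `D`, then for every `x ∈ D` the function
`u ↦ F(u) + ⟨x,R(u)⟩` is of Lévy–Khintchine form with characteristics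
`(A(x), B(x), C(x), ν(x,·))`, which moreover depend on `x` in an affine way. -/
theorem levy_khintchine_form
    (d : ℕ) (D : Set (EuclideanSpace ℝ (Fin d)))
    (hDne : D.Nonempty) (hDmeas : MeasurableSet D) (hspan : affineSpan ℝ D = ⊤)
    (F : EuclideanSpace ℂ (Fin d) → ℂ)
    (R : EuclideanSpace ℂ (Fin d) → EuclideanSpace ℂ (Fin d))
    (hFcont : ∀ k : ℕ, ContinuousOn F (UsetLe d D k))
    (hRcont : ∀ k : ℕ, ContinuousOn R (UsetLe d D k))
    (p : ℝ → EuclideanSpace ℝ (Fin d) → Measure (EuclideanSpace ℝ (Fin d)))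
    (hsub : ∀ t : ℝ, 0 < t → ∀ x ∈ D, p t x Set.univ ≤ 1 ∧ p t x Dᶜ = 0)
    (hlim : ∀ x ∈ D, ∀ u ∈ Uset d D,
      Tendsto (fun t : ℝ =>
          (t : ℂ)⁻¹ * ((∫ ξ in D, Complex.exp (pair u (ξ - x)) ∂(p t x)) - 1))
        (𝓝[>] 0) (𝓝 (F u + pair (R u) x))) :
    ∃ (A : EuclideanSpace ℝ (Fin d) → Matrix (Fin d) (Fin d) ℝ)
      (B : EuclideanSpace ℝ (Fin d) → EuclideanSpace ℝ (Fin d))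
      (C : EuclideanSpace ℝ (Fin d) → ℝ)
      (ν : EuclideanSpace ℝ (Fin d) → Measure (EuclideanSpace ℝ (Fin d))),
      (∀ x ∈ D,
        (A x).PosSemidef ∧ 0 ≤ C x ∧ ν x {0} = 0 ∧
        (∫⁻ ξ, ENNReal.ofReal (min (‖ξ‖ ^ 2) 1) ∂(ν x)) < ⊤ ∧
        ∀ u ∈ Uset d D,
          F u + pair (R u) x
            = (1/2 : ℂ) * (∑ i, ∑ j, u i * (A x i j : ℂ) * u j)
              + pair u (B x) - (C x : ℂ)
              + ∫ ξ, (Complex.exp (pair u ξ) - 1 - pair u (trunc ξ)) ∂(ν x)) ∧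
      (∀ x ∈ D, ∀ y ∈ D, ∀ z ∈ D, ∀ lam : ℝ, x = lam • y + (1 - lam) • z →
        A x = lam • A y + (1 - lam) • A z ∧
        B x = lam • B y + (1 - lam) • B z ∧
        C x = lam * C y + (1 - lam) * C z ∧
        ∀ E : Set (EuclideanSpace ℝ (Fin d)), MeasurableSet E →
          (0 : EuclideanSpace ℝ (Fin d)) ∉ closure E →
          (ν x E).toReal = lam * (ν y E).toReal + (1 - lam) * (ν z E).toReal) := by
  have hchar : ∀ x, ∃ (A : Matrix (Fin d) (Fin d) ℝ) (B : EuclideanSpace ℝ (Fin d)) (C : ℝ)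
      (ν : Measure (EuclideanSpace ℝ (Fin d))), x ∈ D → A.PosSemidef ∧ 0 ≤ C ∧ IsLevy ν ∧
      ∀ u ∈ Uset d D, F u + pair (R u) x = lkExp A B ν u - C := by
    intro x
    by_cases hx : x ∈ D
    swap
    · exact ⟨0, 0, 0, 0, fun h => absurd h hx⟩
    have hmem : ∀ θ, imv θ ∈ UsetLe d D (0 : ℕ) := fun θ ξ _ => by
      rw [re_pair_imv, Nat.cast_zero]
    have hF : Continuous fun θ => F (imv θ) := (hFcont 0).comp_continuous continuous_imv hmem
    have hR : Continuous fun θ => R (imv θ) := (hRcont 0).comp_continuous continuous_imv hmem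
    have hψ : Continuous fun θ => F (imv θ) + pair (R (imv θ)) x := by
      unfold pair
      exact hF.add (continuous_finsetSum _ fun i _ =>
        ((PiLp.continuous_apply 2 _ i).comp hR).mul continuous_const)
    obtain ⟨A, B, C, ν, h⟩ := exists_characteristics hDmeas x (fun t => p t x)
      (fun t ht => (hsub t ht x hx).1) (fun u => F u + pair (R u) x) hψ (hlim x hx)
    exact ⟨A, B, C, ν, fun _ => h⟩
  choose A B C ν h using hchar
  refine ⟨A, B, C, ν, fun x hx => ?_, fun x hx y hy z hz lam hxyz => ?_⟩
  · obtain ⟨hA, hC, hν, hu⟩ := h x hx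
    refine ⟨hA, hC, hν.1, hν.2, fun u hu' => ?_⟩
    rw [hu u hu', lkExp]
    ring
  · obtain ⟨hA₁, -, hν₁, h₁⟩ := h x hx
    obtain ⟨hA₂, -, hν₂, h₂⟩ := h y hy
    obtain ⟨hA₃, -, hν₃, h₃⟩ := h z hz
    have him : ∀ θ, imv θ ∈ Uset d D := fun θ => ⟨0, fun ξ _ => (re_pair_imv θ ξ).le⟩
    have hψ : ∀ u, F u + pair (R u) x
        = lam * (F u + pair (R u) y) + (1 - lam) * (F u + pair (R u) z) := fun u => by
      rw [hxyz, pair_add, pair_smul, pair_smul]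
      push_cast
      ring
    have hC : C x = lam * C y + (1 - lam) * C z := by
      have h0 : (0 : EuclideanSpace ℂ (Fin d)) ∈ Uset d D := imv_zero (d := d) ▸ him 0
      have e := hψ 0
      rw [h₁ 0 h0, h₂ 0 h0, h₃ 0 h0, lkExp_zero, lkExp_zero, lkExp_zero] at e
      have e' : (C x : ℂ) = ((lam * C y + (1 - lam) * C z : ℝ) : ℂ) := by
        push_cast
        linear_combination -e
      exact_mod_cast e'
    obtain ⟨hA, hB, hE⟩ := lk_affine hA₁ hA₂ hA₃ hν₁ hν₂ hν₃ lam (1 - lam) fun θ => by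
      have e := hψ (imv θ)
      rw [h₁ _ (him θ), h₂ _ (him θ), h₃ _ (him θ), hC] at e
      push_cast at e ⊢
      linear_combination e
    exact ⟨hA, hB, hC, fun E _ => hE E⟩
end
end

section
/- Let x ∈ ℝ, t > 0, and let Z be a real random variable with the Gaussian distribution of mean x and variance t. Let u₁, u₂ ∈ ℂ with Re u₂ ≤ 0. Then exp(u₁Z + u₂Z²) is integrable and 𝔼[ exp(u₁Z + u₂Z²) ] = (1 − 2tu₂)^{−1/2} · exp( u₁²t / (2(1 − 2tu₂)) + (u₁x + u₂x²) / (1 − 2tu₂) ), where (1 − 2tu₂)^{−1/2} is defined via the principal branch of the complex square root (note Re(1 − 2tu₂) ≥ 1 > 0). -/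
open MeasureTheory ProbabilityTheory

/-!
Against Lebesgue measure, the Gaussian density times `exp (u₁ z + u₂ z²)` is a constant multiple of
`exp (b z² + c z + d)` with `b = u₂ - 1 / (2t)`, `c = u₁ + x / t`, `d = -x² / (2t)`. Since
`Re u₂ ≤ 0 < t`, we have `Re b < 0`, so this is integrable (`integrable_cexp_quadratic'`) with
integral `(π / -b) ^ (1/2) * exp (d - c² / (4b))` (`integral_cexp_quadratic`). With
`w = 1 - 2tu₂` one has `π / -b = 2πt * w⁻¹`; positivity of `2πt` and `Re w > 0` allow the principal
root of this product to be split as `√(2πt) * w ^ (-1/2)`, whose first factor cancels the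
normalising constant of the density.
-/

/-- The principal square root is multiplicative when one factor is a positive real, and it commutes
with inversion away from the branch cut. -/
lemma cpow_half_ofReal_mul_inv {r : ℝ} (hr : 0 < r) {w : ℂ} (hw : 0 < w.re) :
    ((r : ℂ) * w⁻¹) ^ (1 / 2 : ℂ) = (√r : ℂ) * w ^ (-(1 / 2) : ℂ) := by
  have hw0 : w ≠ 0 := by rintro rfl; simp at hw
  have harg : w.arg ≠ Real.pi := by
    rw [Ne, Complex.arg_eq_pi_iff]
    exact fun h => absurd h.1 hw.le.not_gt
  have hr0 : (r : ℂ) ≠ 0 := by exact_mod_cast hr.ne'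
  have hsq : ((√r : ℝ) : ℂ) = (r : ℂ) ^ (1 / 2 : ℂ) := by
    rw [Real.sqrt_eq_rpow, Complex.ofReal_cpow hr.le]
    norm_num
  rw [hsq, Complex.cpow_def_of_ne_zero (mul_ne_zero hr0 (inv_ne_zero hw0)),
    Complex.cpow_def_of_ne_zero hr0, Complex.cpow_def_of_ne_zero hw0,
    Complex.log_ofReal_mul hr (inv_ne_zero hw0), Complex.log_inv _ harg, ← Complex.exp_add,
    Complex.ofReal_log hr.le]
  congr 1
  ring

/-- The density of the Gaussian law times the exponential of a quadratic is, up to the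
normalising constant, again the exponential of a quadratic. -/
lemma gaussianPDFReal_smul_cexp_quadratic {x t : ℝ} (ht : 0 < t) (u₁ u₂ : ℂ) (z : ℝ) :
    gaussianPDFReal x t.toNNReal z • Complex.exp (u₁ * (z : ℂ) + u₂ * (z : ℂ) ^ 2)
      = ((√(2 * Real.pi * t))⁻¹ : ℂ) *
        Complex.exp ((u₂ - 1 / (2 * t)) * (z : ℂ) ^ 2 + (u₁ + x / t) * z + -x ^ 2 / (2 * t)) := by
  have ht0 : (t : ℂ) ≠ 0 := by exact_mod_cast ht.ne'
  rw [gaussianPDFReal_def, Real.coe_toNNReal t ht.le, Complex.real_smul]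
  push_cast
  rw [mul_assoc, ← Complex.exp_add]
  congr 2
  field_simp
  ring

/-- if `Z` is a real random variable with Gaussian law of mean `x` and
variance `t > 0`, and `u₁, u₂ ∈ ℂ` with `Re u₂ ≤ 0`, then `exp(u₁ Z + u₂ Z²)` is
integrable and
`𝔼[exp(u₁Z + u₂Z²)] = (1 − 2tu₂)^{−1/2} exp(u₁²t/(2(1 − 2tu₂)) + (u₁x + u₂x²)/(1 − 2tu₂))`,
where the complex power is the principal branch. -/
theorem gaussian_quadratic_exponential_moment
    {Ω : Type*} [MeasurableSpace Ω] (P : Measure Ω) [IsProbabilityMeasure P]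
    (Z : Ω → ℝ) (hZ : Measurable Z) (x t : ℝ) (ht : 0 < t)
    (hlaw : P.map Z = gaussianReal x t.toNNReal)
    (u₁ u₂ : ℂ) (hu₂ : u₂.re ≤ 0) :
    Integrable (fun ω => Complex.exp (u₁ * (Z ω : ℂ) + u₂ * (Z ω : ℂ) ^ 2)) P ∧
    ∫ ω, Complex.exp (u₁ * (Z ω : ℂ) + u₂ * (Z ω : ℂ) ^ 2) ∂P
      = (1 - 2 * (t : ℂ) * u₂) ^ (-(1/2) : ℂ) *
        Complex.exp (u₁ ^ 2 * (t : ℂ) / (2 * (1 - 2 * (t : ℂ) * u₂))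
          + (u₁ * (x : ℂ) + u₂ * (x : ℂ) ^ 2) / (1 - 2 * (t : ℂ) * u₂)) := by
  have ht0 : (t : ℂ) ≠ 0 := by exact_mod_cast ht.ne'
  have hv : t.toNNReal ≠ 0 := by simpa using ht
  have hb : (u₂ - 1 / (2 * t)).re < 0 := by
    have h1 : (1 / (2 * (t : ℂ))).re = 1 / (2 * t) := by
      rw [← Complex.ofReal_re (1 / (2 * t))]
      push_cast
      rfl
    have h2 : 0 < 1 / (2 * t) := by positivity
    rw [Complex.sub_re, h1]
    linarith
  have hw : 0 < (1 - 2 * (t : ℂ) * u₂).re := by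
    have h1 : (1 - 2 * (t : ℂ) * u₂).re = 1 - 2 * t * u₂.re := by simp
    rw [h1]
    nlinarith
  have hw0 : 1 - 2 * (t : ℂ) * u₂ ≠ 0 := by
    intro h
    simp [h] at hw
  have hmeas : Measurable fun z : ℝ => Complex.exp (u₁ * (z : ℂ) + u₂ * (z : ℂ) ^ 2) := by
    fun_prop
  constructor
  · have key : Integrable (fun z : ℝ => Complex.exp (u₁ * (z : ℂ) + u₂ * (z : ℂ) ^ 2))
        (P.map Z) := by
      rw [hlaw, gaussianReal_of_var_ne_zero _ hv,
        integrable_withDensity_iff_integrable_smul' (measurable_gaussianPDF _ _)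
          (ae_of_all _ fun _ => gaussianPDF_lt_top)]
      simp_rw [toReal_gaussianPDF, gaussianPDFReal_smul_cexp_quadratic ht]
      exact (integrable_cexp_quadratic' hb _ _).const_mul _
    exact key.comp_measurable hZ
  · rw [← integral_map (φ := Z) hZ.aemeasurable hmeas.aestronglyMeasurable, hlaw,
      integral_gaussianReal_eq_integral_smul hv]
    simp_rw [gaussianPDFReal_smul_cexp_quadratic ht]
    rw [integral_const_mul, integral_cexp_quadratic hb]
    have hr : 0 < 2 * Real.pi * t := by positivity
    have hbw : u₂ - 1 / (2 * (t : ℂ)) = -(1 - 2 * (t : ℂ) * u₂) / (2 * t) := by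
      field_simp
      ring
    have hbase : (Real.pi : ℂ) / -(u₂ - 1 / (2 * (t : ℂ)))
        = ((2 * Real.pi * t : ℝ) : ℂ) * (1 - 2 * (t : ℂ) * u₂)⁻¹ := by
      rw [hbw]
      push_cast
      field_simp
    have hs : ((√(2 * Real.pi * t) : ℝ) : ℂ) ≠ 0 := by
      exact_mod_cast (Real.sqrt_pos.mpr hr).ne'
    rw [hbase, cpow_half_ofReal_mul_inv hr hw, ← mul_assoc, inv_mul_cancel_left₀ hs, hbw]
    congr 2
    -- Naming `w` keeps `field_simp` from expanding it; `u₂` is then eliminated through `w`.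
    obtain ⟨w, hwdef⟩ : ∃ w : ℂ, w = 1 - 2 * (t : ℂ) * u₂ := ⟨_, rfl⟩
    have hu : u₂ = (1 - w) / (2 * t) := by
      rw [hwdef]
      field_simp
      ring
    rw [← hwdef] at hw0 ⊢
    rw [hu]
    field_simp
    ring
end

section
/- Let D ⊆ ℝ^d be a set whose affine hull is all of ℝ^d, let S be a topological space, and for each x ∈ D let g_x : S → ℂ be a continuous function. Suppose φ : S → ℂ and ψ : S → ℂ^d satisfy g_x(s) = φ(s) + ⟨x, ψ(s)⟩ for all x ∈ D and s ∈ S. Then φ and ψ are continuous on S, and they are uniquely determined: if φ' : S → ℂ and ψ' : S → ℂ^d also satisfy g_x(s) = φ'(s) + ⟨x, ψ'(s)⟩ for all x ∈ D and s ∈ S, then φ' = φ and ψ' = ψ. -/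
/-!
For fixed `s`, the map `x ↦ φ s + pair (ψ s) x` is affine in `x`. Hence both the set of `x` at which
it is continuous in `s`, and the set of `x` at which it agrees with the corresponding map for
`(φ', ψ')`, are closed under the affine operations `c • (u - v) + w`. They contain `D`, whose affine
span is everything, so they are all of `ℝ^d`. Evaluating at `0` recovers `φ`, and evaluating at the
standard basis vectors recovers the coordinates of `ψ`.
-/

noncomputable section

lemma pair_smul_vsub_vadd {d : ℕ} (u : EuclideanSpace ℂ (Fin d)) (c : ℝ)
    (x y z : EuclideanSpace ℝ (Fin d)) :
    pair u (c • (x -ᵥ y) +ᵥ z) = c * (pair u x - pair u y) + pair u z := by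
  simp only [pair, Finset.mul_sum, ← Finset.sum_sub_distrib, ← Finset.sum_add_distrib]
  refine Finset.sum_congr rfl fun i _ => ?_
  simp
  ring

lemma pair_zero_right {d : ℕ} (u : EuclideanSpace ℂ (Fin d)) : pair u 0 = 0 := by
  simp [pair]

lemma pair_single {d : ℕ} (u : EuclideanSpace ℂ (Fin d)) (i : Fin d) :
    pair u (EuclideanSpace.single i 1) = u i := by
  simp [pair, apply_ite]

/-- if `D` affinely spans `ℝ^d`, each `g_x : S → ℂ` (`x ∈ D`) is
continuous, and `g_x(s) = φ(s) + ⟨x, ψ(s)⟩` for all `x ∈ D`, `s ∈ S`, then `φ` and `ψ`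
are continuous on `S` and are uniquely determined by this property. -/
theorem affine_decomposition_continuous_unique
    (d : ℕ) (D : Set (EuclideanSpace ℝ (Fin d))) (hspan : affineSpan ℝ D = ⊤)
    {S : Type*} [TopologicalSpace S]
    (g : EuclideanSpace ℝ (Fin d) → S → ℂ)
    (hg : ∀ x ∈ D, Continuous (g x))
    (φ : S → ℂ) (ψ : S → EuclideanSpace ℂ (Fin d))
    (hdecomp : ∀ x ∈ D, ∀ s : S, g x s = φ s + pair (ψ s) x) :
    (Continuous φ ∧ Continuous ψ) ∧
    ∀ (φ' : S → ℂ) (ψ' : S → EuclideanSpace ℂ (Fin d)),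
      (∀ x ∈ D, ∀ s : S, g x s = φ' s + pair (ψ' s) x) →
      φ' = φ ∧ ψ' = ψ := by
  have hcont : ∀ x, Continuous fun s => φ s + pair (ψ s) x := by
    intro x
    refine affineSpan_induction (k := ℝ) (s := D)
      (p := fun x => Continuous fun s => φ s + pair (ψ s) x) (hspan ▸ AffineSubspace.mem_top ℝ _ x)
      (fun x hx => (hg x hx).congr (hdecomp x hx)) fun c u v w hu hv hw => ?_
    refine ((continuous_const (y := (c : ℂ))).mul (hu.sub hv) |>.add hw).congr fun s => ?_
    simp only [pair_smul_vsub_vadd, Pi.add_apply, Pi.mul_apply, Pi.sub_apply]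
    ring
  have hφ : Continuous φ := by simpa [pair_zero_right] using hcont 0
  refine ⟨⟨hφ, ?_⟩, fun φ' ψ' h' => ?_⟩
  · refine (PiLp.continuous_toLp 2 _).comp (continuous_pi fun i => ?_ :
      Continuous fun s i => ψ s i)
    exact ((hcont (EuclideanSpace.single i 1)).sub hφ).congr fun s => by simp [pair_single]
  · have heq : ∀ x s, φ' s + pair (ψ' s) x = φ s + pair (ψ s) x := by
      intro x s
      refine affineSpan_induction (k := ℝ) (s := D)
        (p := fun x => φ' s + pair (ψ' s) x = φ s + pair (ψ s) x)
        (hspan ▸ AffineSubspace.mem_top ℝ _ x)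
        (fun x hx => (h' x hx s).symm.trans (hdecomp x hx s)) fun c u v w hu hv hw => ?_
      rw [pair_smul_vsub_vadd, pair_smul_vsub_vadd]
      linear_combination (c : ℂ) * (hu - hv) + hw
    have hφ' : ∀ s, φ' s = φ s := fun s => by simpa [pair_zero_right] using heq 0 s
    refine ⟨funext hφ', funext fun s => PiLp.ext fun i => ?_⟩
    simpa [pair_single, hφ' s] using heq (EuclideanSpace.single i 1) s
end
end
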